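/- arXiv:1303.4454 — 3 statements merged into one kernel-verified Lean document; each statement's English description precedes it below -/
import Mathlib

section
/- Let S ⊆ ℤ² be a finite set of lattice points and let P = convexHull ℝ S ⊆ ℝ² have nonempty interior (a convex lattice polygon). Then the area of P satisfies Pick's formula: A = I + B/2 − 1, where A is the Lebesgue measure of P, I is the number of points of ℤ² in the topological interior of P, and B is the number of points of ℤ² in the topological frontier of P. -/
/-!
Pick's formula is proved by counting lattice points column by column.

Over the projection `[a, b]` of `P` to the first axis, `P` is the region `-v ≤ y ≤ u`, where `u` is
the upper boundary of `P` and `v` that of its reflection `(x, y) ↦ (x, -y)`; both are concave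
(`exists_isTop`, `mem_hull_iff`) and `P` has area `∫ u + ∫ v` (`volume_hull`).

Let `rnd y = (⌊y⌋ + ⌈y⌉) / 2`, an odd function that commutes with integer translations. In a column
`x = k` with `a < k < b`, the lattice points of the interior and those of `P` together number
`2 (rnd (u k) + rnd (v k))`. In each of the two extreme columns there are no interior points, the
values of `u` and `v` are integers (`IsTop.end_int`), and `P` has `u + v + 1` lattice points.
So `I + B / 2`, half the sum of these counts, is the trapezoidal sum of `rnd ∘ u + rnd ∘ v`
over `a, …, b`, plus `1`.

That trapezoidal sum is exactly `∫ u + ∫ v` (`IsTop.integral`). Between consecutive lattice points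
of the boundary `u` is affine (`IsTop.step`), and on an affine piece with integer values at integer
ends `c < d` the values at `k` and `c + d - k` add up to an integer, so the rounding errors cancel
(`sum_rnd_affine`).
-/

open MeasureTheory Set

/-- The embedding of the lattice `ℤ²` into `ℝ²`. -/
noncomputable def latticeMap : (Fin 2 → ℤ) → (Fin 2 → ℝ) := fun n j => (n j : ℝ)

namespace Pick

/-! ### The upper boundary of a lattice polygon -/

/-- The convex hull in `ℝ²` of a finite set of lattice points. -/
def hull (S : Finset (Fin 2 → ℤ)) : Set (Fin 2 → ℝ) :=
  convexHull ℝ (latticeMap '' (S : Set (Fin 2 → ℤ)))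

lemma mem_hull {S : Finset (Fin 2 → ℤ)} {s : Fin 2 → ℤ} (hs : s ∈ S) :
    latticeMap s ∈ hull S :=
  subset_convexHull ℝ _ ⟨s, hs, rfl⟩

lemma isCompact_hull (S : Finset (Fin 2 → ℤ)) : IsCompact (hull S) :=
  (S.finite_toSet.image _).isCompact_convexHull ℝ

/-- A linear inequality valid at the generating lattice points is valid on their hull. -/
lemma hull_le {S : Finset (Fin 2 → ℤ)} (α β c : ℝ)
    (h : ∀ s ∈ S, α * (s 0 : ℝ) + β * (s 1 : ℝ) ≤ c) {p : Fin 2 → ℝ} (hp : p ∈ hull S) :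
    α * p 0 + β * p 1 ≤ c := by
  have hconv : Convex ℝ {p : Fin 2 → ℝ | α * p 0 + β * p 1 ≤ c} := by
    intro p hp q hq s t hs ht hst
    simp only [mem_ofPred_eq, Pi.add_apply, Pi.smul_apply, smul_eq_mul] at *
    have : c = s * c + t * c := by rw [← add_mul, hst, one_mul]
    nlinarith [mul_le_mul_of_nonneg_left hp hs, mul_le_mul_of_nonneg_left hq ht]
  refine convexHull_min ?_ hconv hp
  rintro _ ⟨s, hs, rfl⟩
  exact h s hs

/-- `IsTop S a b u` says that `S` lies in the strip `a ≤ x ≤ b` and that the graph of `u` over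
`[a, b]` is the upper boundary of the convex hull of `S`. -/
structure IsTop (S : Finset (Fin 2 → ℤ)) (a b : ℤ) (u : ℝ → ℝ) : Prop where
  lo : ∀ s ∈ S, a ≤ s 0
  hi : ∀ s ∈ S, s 0 ≤ b
  concave : ConcaveOn ℝ (Icc (a : ℝ) b) u
  mem : ∀ x ∈ Icc (a : ℝ) b, ![x, u x] ∈ hull S
  le : ∀ p ∈ hull S, p 1 ≤ u (p 0)

lemma hull_fst_mem {S : Finset (Fin 2 → ℤ)} {a b : ℤ} (ha : ∀ s ∈ S, a ≤ s 0)
    (hb : ∀ s ∈ S, s 0 ≤ b) {p : Fin 2 → ℝ} (hp : p ∈ hull S) : p 0 ∈ Icc (a : ℝ) b := by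
  have h1 := hull_le (S := S) (-1) 0 (-a) (fun s hs => by
    have : (a : ℝ) ≤ s 0 := by exact_mod_cast ha s hs
    linarith) hp
  have h2 := hull_le (S := S) 1 0 b (fun s hs => by
    have : (s 0 : ℝ) ≤ b := by exact_mod_cast hb s hs
    linarith) hp
  constructor <;> linarith

lemma exists_isTop {S : Finset (Fin 2 → ℤ)} {a b : ℤ} (ha : ∀ s ∈ S, a ≤ s 0)
    (hb : ∀ s ∈ S, s 0 ≤ b) (ha' : ∃ s ∈ S, s 0 = a) (hb' : ∃ s ∈ S, s 0 = b) :
    ∃ u, IsTop S a b u := by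
  obtain ⟨s, hs, hsa⟩ := ha'
  obtain ⟨t, ht, htb⟩ := hb'
  have hconv : Convex ℝ (hull S) := convex_convexHull ℝ _
  have key : ∀ x : ℝ, ∃ y : ℝ, x ∈ Icc (a : ℝ) b →
      ![x, y] ∈ hull S ∧ ∀ p ∈ hull S, p 0 = x → p 1 ≤ y := by
    intro x
    by_cases hx : x ∈ Icc (a : ℝ) b
    swap
    · exact ⟨0, fun h => absurd h hx⟩
    have hproj : ((fun p : Fin 2 → ℝ => p 0) '' hull S).OrdConnected := by
      have : Convex ℝ ((LinearMap.proj (R := ℝ) (φ := fun _ : Fin 2 => ℝ) 0) '' hull S) :=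
        hconv.linear_image _
      exact this.ordConnected
    obtain ⟨p, hp, hpx⟩ := hproj.out ⟨_, mem_hull hs, by simp [latticeMap, hsa]⟩
      ⟨_, mem_hull ht, by simp [latticeMap, htb]⟩ hx
    have hcomp : IsCompact (hull S ∩ {p | p 0 = x}) :=
      (isCompact_hull S).inter_right (isClosed_eq (continuous_apply 0) continuous_const)
    obtain ⟨q, ⟨hq, hqx⟩, hmax⟩ := hcomp.exists_isMaxOn ⟨p, hp, hpx⟩
      (continuous_apply (1 : Fin 2)).continuousOn
    refine ⟨q 1, fun _ => ⟨?_, fun r hr hrx => hmax ⟨hr, hrx⟩⟩⟩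
    have : ![x, q 1] = q := by
      ext i; fin_cases i
      · exact hqx.symm
      · rfl
    rwa [this]
  choose u hu using key
  refine ⟨u, ha, hb, ⟨convex_Icc _ _, ?_⟩, fun x hx => (hu x hx).1,
    fun p hp => (hu _ (hull_fst_mem ha hb hp)).2 p hp rfl⟩
  intro x hx y hy α β hα hβ hαβ
  have := hconv (hu x hx).1 (hu y hy).1 hα hβ hαβ
  have h2 := (hu _ (convex_Icc _ _ hx hy hα hβ hαβ)).2 _ this (by simp)
  simpa using h2

/-- The upper boundary function is an integer at an extreme abscissa `e` of `S`
(`ε = 1` for the left end, `ε = -1` for the right end). -/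
lemma IsTop.end_int {S : Finset (Fin 2 → ℤ)} {a b : ℤ} {u : ℝ → ℝ} (h : IsTop S a b u)
    (e ε : ℤ) (he : ∀ s ∈ S, 0 ≤ ε * (s 0 - e)) (hε : ε * ε = 1) (he' : ∃ s ∈ S, s 0 = e) :
    ∃ n : ℤ, u e = n := by
  have hne : (S.filter (fun s => s 0 = e)).Nonempty := by
    obtain ⟨s, hs, h0⟩ := he'
    exact ⟨s, by simp [hs, h0]⟩
  obtain ⟨s, hs, hmax⟩ := Finset.exists_max_image _ (fun s : Fin 2 → ℤ => s 1) hne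
  simp only [Finset.mem_filter] at hs hmax
  obtain ⟨t, -, htmax⟩ := Finset.exists_max_image S (fun s : Fin 2 → ℤ => s 1) ⟨s, hs.1⟩
  have hmem := mem_hull hs.1
  have hee : (e : ℝ) ∈ Icc (a : ℝ) b := by
    have h1 := h.lo s hs.1
    have h2 := h.hi s hs.1
    rw [hs.2] at h1 h2
    exact ⟨by exact_mod_cast h1, by exact_mod_cast h2⟩
  refine ⟨s 1, le_antisymm ?_ ?_⟩
  · -- A line through the top point of the column, of slope steep enough, bounds the hull.
    have hh := hull_le (S := S) (-((t 1 - s 1 : ℤ) : ℝ) * ε) 1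
      ((s 1 : ℝ) - ((t 1 - s 1 : ℤ) : ℝ) * ε * e) (fun r hr => by
        have hz : r 1 ≤ s 1 + (t 1 - s 1) * (ε * (r 0 - e)) := by
          have h1 := htmax s hs.1
          have h2 := htmax r hr
          by_cases hr0 : r 0 = e
          · have := hmax r ⟨hr, hr0⟩
            simp [hr0, this]
          · have h3 : 1 ≤ ε * (r 0 - e) := by
              rcases (he r hr).lt_or_eq with h | h
              · omega
              · exfalso
                rcases mul_eq_zero.1 h.symm with h | h
                · simp [h] at hε
                · omega
            nlinarith
        have hz' : (r 1 : ℝ) ≤ s 1 + (t 1 - s 1) * (ε * (r 0 - e)) := by exact_mod_cast hz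
        push_cast
        linarith) (h.mem _ hee)
    simp at hh
    linarith
  · have := h.le _ hmem
    simpa [latticeMap, hs.2] using this

/-- An edge of the upper boundary joins lattice points: between two integers where `u` is an
integer, either `u` is affine or the boundary has a further lattice point. -/
lemma IsTop.step {S : Finset (Fin 2 → ℤ)} {a b : ℤ} {u : ℝ → ℝ} (h : IsTop S a b u)
    (hS : S.Nonempty) (c d : ℤ) (hac : a ≤ c) (hcd : c < d) (hdb : d ≤ b) :
    (∃ m k : ℝ, ∀ x ∈ Icc (c : ℝ) d, u x = m * x + k) ∨
    ∃ e : ℤ, c < e ∧ e < d ∧ ∃ n : ℤ, u e = n := by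
  have hac' : (a : ℝ) ≤ c := by exact_mod_cast hac
  have hcd' : (c : ℝ) < d := by exact_mod_cast hcd
  have hdb' : (d : ℝ) ≤ b := by exact_mod_cast hdb
  obtain ⟨m, k, hc, hd⟩ : ∃ m k : ℝ, u c = m * c + k ∧ u d = m * d + k := by
    have : (d : ℝ) - c ≠ 0 := by linarith
    refine ⟨(u d - u c) / (d - c), u c - (u d - u c) / (d - c) * c, by ring, ?_⟩
    field_simp
    ring
  by_cases hall : ∀ x ∈ Icc (c : ℝ) d, u x = m * x + k
  · exact Or.inl ⟨m, k, hall⟩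
  right
  push Not at hall
  obtain ⟨t, ht, htne⟩ := hall
  have hg : ConcaveOn ℝ (Icc (a : ℝ) b) (fun x => u x - m * x) := by
    refine ⟨convex_Icc _ _, fun x hx y hy α β hα hβ hαβ => ?_⟩
    have := h.concave.2 hx hy hα hβ hαβ
    simp only [smul_eq_mul] at *
    linarith
  have hge := (hg.convex_ge k).ordConnected
  have hgt := (hg.convex_gt k).ordConnected
  have hcab : (c : ℝ) ∈ Icc (a : ℝ) b := ⟨by linarith, by linarith⟩
  have hdab : (d : ℝ) ∈ Icc (a : ℝ) b := ⟨by linarith, by linarith⟩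
  have htab : t ∈ Icc (a : ℝ) b := ⟨by linarith [ht.1], by linarith [ht.2]⟩
  have htk : k < u t - m * t := by
    have h1 := (hge.out ⟨hcab, by simp [hc]⟩ ⟨hdab, by simp [hd]⟩ ht).2
    refine lt_of_le_of_ne h1 fun h => htne (by linarith)
  -- A point of `S` farthest above the chord lies on the upper boundary, strictly inside.
  obtain ⟨s, hs, hmax⟩ := Finset.exists_max_image S
    (fun s : Fin 2 → ℤ => (s 1 : ℝ) - m * s 0) hS
  have hbound : ∀ p ∈ hull S, p 1 - m * p 0 ≤ s 1 - m * s 0 := fun p hp => by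
    have := hull_le (S := S) (-m) 1 (s 1 - m * s 0)
      (fun r hr => by have := hmax r hr; linarith) hp
    linarith
  have hsab : (s 0 : ℝ) ∈ Icc (a : ℝ) b := hull_fst_mem h.lo h.hi (mem_hull hs)
  have hus : u (s 0) = s 1 := by
    have h1 := h.le _ (mem_hull hs)
    have h2 := hbound _ (h.mem _ hsab)
    simp [latticeMap] at h1 h2
    linarith
  have hsk : k < u (s 0) - m * s 0 := by
    have h2 := hbound _ (h.mem _ htab)
    simp at h2
    linarith
  refine ⟨s 0, ?_, ?_, s 1, hus⟩
  · by_contra! hle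
    have hle' : (s 0 : ℝ) ≤ c := by exact_mod_cast hle
    have := (hgt.out ⟨hsab, hsk⟩ ⟨htab, htk⟩ ⟨hle', ht.1⟩).2
    simp [hc] at this
  · by_contra! hle
    have hle' : (d : ℝ) ≤ s 0 := by exact_mod_cast hle
    have := (hgt.out ⟨htab, htk⟩ ⟨hsab, hsk⟩ ⟨ht.2, hle'⟩).2
    simp [hd] at this

/-! ### Rounded trapezoidal sums -/

/-- The symmetric rounding `y - ((y))`, where `((y))` is the sawtooth function. -/
noncomputable def rnd (y : ℝ) : ℝ := ((⌊y⌋ : ℝ) + ⌈y⌉) / 2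

lemma rnd_int (n : ℤ) : rnd n = n := by simp [rnd]

lemma rnd_add_rnd {x y : ℝ} {n : ℤ} (h : x + y = n) : rnd x + rnd y = n := by
  have : y = n - x := by linarith
  subst this
  have h1 : ⌊(n : ℝ) - x⌋ = n - ⌈x⌉ := by
    rw [sub_eq_add_neg, Int.floor_intCast_add, Int.floor_neg]; ring
  have h2 : ⌈(n : ℝ) - x⌉ = n - ⌊x⌋ := by
    rw [sub_eq_add_neg, Int.ceil_intCast_add, Int.ceil_neg]; ring
  simp only [rnd, h1, h2]
  push_cast
  ring

/-- Along one edge the rounding errors cancel in pairs under `k ↦ c + d - k`. -/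
lemma sum_rnd_affine {u : ℝ → ℝ} {c d : ℤ} (hcd : c < d) {m k : ℝ}
    (hu : ∀ x ∈ Icc (c : ℝ) d, u x = m * x + k) {n₁ n₂ : ℤ} (hc : u c = n₁) (hd : u d = n₂) :
    ∑ j ∈ Finset.Icc c d, rnd (u j) = (d - c + 1) * (u c + u d) / 2 := by
  have hcd' : (c : ℝ) < d := by exact_mod_cast hcd
  have hsymm : ∑ j ∈ Finset.Icc c d, rnd (u j) =
      ∑ j ∈ Finset.Icc c d, rnd (u ((c + d - j : ℤ))) := by
    refine Finset.sum_nbij' (fun j => c + d - j) (fun j => c + d - j) ?_ ?_ ?_ ?_ ?_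
    · intro j hj; simp only [Finset.mem_Icc] at *; omega
    · intro j hj; simp only [Finset.mem_Icc] at *; omega
    · intro j _; simp
    · intro j _; simp
    · intro j _; simp
  have h2 : ∑ j ∈ Finset.Icc c d, (rnd (u j) + rnd (u ((c + d - j : ℤ)))) =
      ∑ j ∈ Finset.Icc c d, (u c + u d) := by
    refine Finset.sum_congr rfl fun j hj => ?_
    rw [Finset.mem_Icc] at hj
    have h1 : (c : ℝ) ≤ j := by exact_mod_cast hj.1
    have h2 : (j : ℝ) ≤ d := by exact_mod_cast hj.2
    have := @rnd_add_rnd (u j) (u ((c + d - j : ℤ))) (n₁ + n₂) (by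
      push_cast
      rw [← hc, ← hd, hu _ ⟨h1, h2⟩, hu _ ⟨by linarith, by linarith⟩,
        hu _ ⟨le_rfl, hcd'.le⟩, hu _ ⟨hcd'.le, le_rfl⟩]
      ring)
    rw [this, hc, hd]; push_cast; ring
  rw [Finset.sum_add_distrib, ← hsymm, Finset.sum_const, Int.card_Icc, nsmul_eq_mul] at h2
  have h3 : (((d + 1 - c).toNat : ℕ) : ℝ) = d - c + 1 := by
    have : (((d + 1 - c).toNat : ℕ) : ℤ) = d + 1 - c := Int.toNat_of_nonneg (by omega)
    have : (((d + 1 - c).toNat : ℕ) : ℝ) = ((d + 1 - c : ℤ) : ℝ) := by exact_mod_cast this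
    rw [this]; push_cast; ring
  rw [h3] at h2
  linarith

lemma sum_Icc_eq_Ico (f : ℤ → ℝ) {c d : ℤ} (h : c ≤ d) :
    ∑ j ∈ Finset.Icc c d, f j = ∑ j ∈ Finset.Ico c d, f j + f d := by
  rw [← Finset.Ico_insert_right h, Finset.sum_insert (by simp), add_comm]

/-- The trapezoidal rule with rounded values computes the integral of `u` exactly. -/
lemma IsTop.integral {S : Finset (Fin 2 → ℤ)} {a b : ℤ} {u : ℝ → ℝ} (h : IsTop S a b u)
    (hS : S.Nonempty) (N : ℕ) : ∀ c d : ℤ, d - c ≤ N → a ≤ c → c < d → d ≤ b →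
    (∃ n : ℤ, u c = n) → (∃ n : ℤ, u d = n) →
    IntervalIntegrable u volume c d ∧
    ∫ x in (c : ℝ)..d, u x = ∑ j ∈ Finset.Ico c d, rnd (u j) + (u d - u c) / 2 := by
  induction N with
  | zero => intro c d h1 _ h2; omega
  | succ N ih =>
    intro c d hN hac hcd hdb hc hd
    have hcd' : (c : ℝ) < d := by exact_mod_cast hcd
    rcases h.step hS c d hac hcd hdb with ⟨m, k, haff⟩ | ⟨e, hce, hed, he⟩
    · obtain ⟨n₁, hc⟩ := hc
      obtain ⟨n₂, hd⟩ := hd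
      have hcont : Continuous fun x : ℝ => m * x + k := by fun_prop
      have heq : EqOn (fun x : ℝ => m * x + k) u (uIcc (c : ℝ) d) := by
        rw [uIcc_of_le hcd'.le]
        exact fun x hx => (haff x hx).symm
      refine ⟨(hcont.intervalIntegrable _ _).congr
        (fun x hx => heq (uIoc_subset_uIcc hx)), ?_⟩
      rw [← intervalIntegral.integral_congr heq,
        intervalIntegral.integral_add (Continuous.intervalIntegrable (by fun_prop) _ _)
          (by simp), intervalIntegral.integral_const_mul, integral_id,
        intervalIntegral.integral_const]
      have h1 := sum_rnd_affine hcd haff hc hd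
      rw [sum_Icc_eq_Ico _ hcd.le] at h1
      have h2 : rnd (u d) = u d := by rw [hd, rnd_int]
      have h3 := haff c ⟨le_rfl, hcd'.le⟩
      have h4 := haff d ⟨hcd'.le, le_rfl⟩
      rw [h2] at h1
      have h5 : ∑ j ∈ Finset.Ico c d, rnd (u j) = (d - c + 1) * (u c + u d) / 2 - u d := by
        linarith
      rw [h5, h3, h4, smul_eq_mul]
      ring
    · obtain ⟨i1, e1⟩ := ih c e (by push_cast at hN; omega) hac hce (by omega) hc he
      obtain ⟨i2, e2⟩ := ih e d (by push_cast at hN; omega) (by omega) hed hdb he hd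
      refine ⟨i1.trans i2, ?_⟩
      rw [← intervalIntegral.integral_add_adjacent_intervals i1 i2, e1, e2]
      have : ∑ j ∈ Finset.Ico c d, rnd (u j) =
          ∑ j ∈ Finset.Ico c e, rnd (u j) + ∑ j ∈ Finset.Ico e d, rnd (u j) := by
        rw [← Finset.Ico_union_Ico_eq_Ico hce.le hed.le,
          Finset.sum_union (Finset.Ico_disjoint_Ico_consecutive _ _ _)]
      rw [this]; ring

/-! ### The polygon as the region between two graphs -/

/-- The reflection `(x, y) ↦ (x, -y)` of the lattice; it turns lower boundaries into upper ones. -/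
def reflZ (s : Fin 2 → ℤ) : Fin 2 → ℤ := ![s 0, -s 1]

/-- The reflection `(x, y) ↦ (x, -y)` of the plane. -/
def reflR : (Fin 2 → ℝ) →ₗ[ℝ] (Fin 2 → ℝ) where
  toFun p := ![p 0, -p 1]
  map_add' p q := by ext i; fin_cases i <;> simp [add_comm]
  map_smul' c p := by ext i; fin_cases i <;> simp

lemma hull_refl (S : Finset (Fin 2 → ℤ)) : hull (S.image reflZ) = reflR '' hull S := by
  rw [hull, hull, LinearMap.image_convexHull, image_image, Finset.coe_image, image_image]
  congr 2
  funext s i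
  fin_cases i <;> simp [reflR, reflZ, latticeMap]

lemma mem_hull_refl {S : Finset (Fin 2 → ℤ)} {x y : ℝ} (h : ![x, y] ∈ hull (S.image reflZ)) :
    ![x, -y] ∈ hull S := by
  rw [hull_refl] at h
  obtain ⟨p, hp, hpx⟩ := h
  have h0 := congrFun hpx 0
  have h1 := congrFun hpx 1
  simp [reflR] at h0 h1
  have : ![x, -y] = p := by
    ext i; fin_cases i <;> simp [← h0, ← h1]
  rwa [this]

/-- The hull is the region between the graphs of `-v` and `u`, with `v` the upper boundary
of the reflected hull. -/
lemma mem_hull_iff {S : Finset (Fin 2 → ℤ)} {a b : ℤ} {u v : ℝ → ℝ} (hu : IsTop S a b u)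
    (hv : IsTop (S.image reflZ) a b v) (p : Fin 2 → ℝ) :
    p ∈ hull S ↔ p 0 ∈ Icc (a : ℝ) b ∧ -v (p 0) ≤ p 1 ∧ p 1 ≤ u (p 0) := by
  constructor
  · intro hp
    refine ⟨hull_fst_mem hu.lo hu.hi hp, ?_, hu.le p hp⟩
    have : reflR p ∈ hull (S.image reflZ) := by
      rw [hull_refl]; exact mem_image_of_mem _ hp
    have := hv.le _ this
    simp [reflR] at this
    linarith
  · rintro ⟨h0, h1, h2⟩
    have hconv : Convex ℝ {y : ℝ | ![p 0, y] ∈ hull S} := by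
      intro y hy z hz α β hα hβ hαβ
      have := (convex_convexHull ℝ _ : Convex ℝ (hull S)) hy hz hα hβ hαβ
      have h3 : ![p 0, α • y + β • z] = α • ![p 0, y] + β • ![p 0, z] := by
        ext i
        fin_cases i
        · simp [← add_mul, hαβ]
        · simp
      rw [mem_ofPred_eq, h3]
      exact this
    have h4 : ![p 0, p 1] ∈ hull S :=
      hconv.ordConnected.out (mem_hull_refl (hv.mem _ h0)) (hu.mem _ h0) ⟨h1, h2⟩
    have h5 : ![p 0, p 1] = p := by ext i; fin_cases i <;> rfl
    rwa [h5] at h4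

lemma exists_add_mem_of_mem_interior {H : Set (Fin 2 → ℝ)} {p : Fin 2 → ℝ}
    (hp : p ∈ interior H) (w : Fin 2 → ℝ) : ∃ ε : ℝ, 0 < ε ∧ p + ε • w ∈ H := by
  have hc : ContinuousAt (fun ε : ℝ => p + ε • w) 0 := by fun_prop
  have h1 : ∀ᶠ ε in nhds (0 : ℝ), p + ε • w ∈ H :=
    hc.eventually (by simpa using mem_interior_iff_mem_nhds.1 hp)
  have h2 : ∀ᶠ ε in nhdsWithin (0 : ℝ) (Ioi 0), p + ε • w ∈ H := nhdsWithin_le_nhds h1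
  obtain ⟨ε, h3, h4⟩ := (h2.and self_mem_nhdsWithin).exists
  exact ⟨ε, h4, h3⟩

lemma mem_interior_hull_iff {S : Finset (Fin 2 → ℤ)} {a b : ℤ} {u v : ℝ → ℝ}
    (hu : IsTop S a b u) (hv : IsTop (S.image reflZ) a b v) (p : Fin 2 → ℝ) :
    p ∈ interior (hull S) ↔ p 0 ∈ Ioo (a : ℝ) b ∧ -v (p 0) < p 1 ∧ p 1 < u (p 0) := by
  constructor
  · intro hp
    obtain ⟨ε₁, hε₁, h1⟩ := exists_add_mem_of_mem_interior hp ![1, 0]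
    obtain ⟨ε₂, hε₂, h2⟩ := exists_add_mem_of_mem_interior hp ![-1, 0]
    obtain ⟨ε₃, hε₃, h3⟩ := exists_add_mem_of_mem_interior hp ![0, 1]
    obtain ⟨ε₄, hε₄, h4⟩ := exists_add_mem_of_mem_interior hp ![0, -1]
    rw [mem_hull_iff hu hv] at h1 h2 h3 h4
    simp at h1 h2 h3 h4
    refine ⟨⟨?_, ?_⟩, ?_, ?_⟩ <;> linarith
  · intro hp
    have hcu : ContinuousOn u (Ioo (a : ℝ) b) :=
      (hu.concave.subset Ioo_subset_Icc_self (convex_Ioo _ _)).continuousOn isOpen_Ioo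
    have hcv : ContinuousOn v (Ioo (a : ℝ) b) :=
      (hv.concave.subset Ioo_subset_Icc_self (convex_Ioo _ _)).continuousOn isOpen_Ioo
    have hc0 : Continuous fun p : Fin 2 → ℝ => p 0 := continuous_apply 0
    have hc1 : Continuous fun p : Fin 2 → ℝ => p 1 := continuous_apply 1
    have hm : MapsTo (fun p : Fin 2 → ℝ => p 0) ((fun p : Fin 2 → ℝ => p 0) ⁻¹' Ioo (a : ℝ) b)
      (Ioo (a : ℝ) b) := fun _ h => h
    have hf : ContinuousOn (fun p : Fin 2 → ℝ => (p 1 + v (p 0), u (p 0) - p 1))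
        ((fun p : Fin 2 → ℝ => p 0) ⁻¹' Ioo (a : ℝ) b) :=
      (hc1.continuousOn.add (hcv.comp hc0.continuousOn hm)).prodMk
        ((hcu.comp hc0.continuousOn hm).sub hc1.continuousOn)
    have hopen := hf.isOpen_inter_preimage (isOpen_Ioo.preimage hc0)
      ((isOpen_Ioi (a := (0 : ℝ))).prod (isOpen_Ioi (a := (0 : ℝ))))
    refine mem_interior.2 ⟨_, ?_, hopen, ⟨hp.1, ?_, ?_⟩⟩
    · rintro q ⟨hq0, hq1, hq2⟩
      simp only [mem_Ioi] at hq1 hq2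
      exact (mem_hull_iff hu hv q).2 ⟨Ioo_subset_Icc_self hq0, by linarith, by linarith⟩
    · simp only [mem_Ioi]; linarith [hp.2.1]
    · simp only [mem_Ioi]; linarith [hp.2.2]

/-- A nonnegative concave function that is positive somewhere is positive inside its interval. -/
lemma concave_pos {a b q x : ℝ} {w : ℝ → ℝ} (hw : ConcaveOn ℝ (Icc a b) w)
    (h0 : ∀ x ∈ Icc a b, 0 ≤ w x) (hq : q ∈ Icc a b) (hwq : 0 < w q) (hx : x ∈ Ioo a b) :
    0 < w x := by
  have key : ∀ e ∈ Icc a b, x ∈ openSegment ℝ q e → 0 < w x := by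
    rintro e he ⟨α, β, hα, hβ, hαβ, rfl⟩
    have h1 := hw.2 hq he hα.le hβ.le hαβ
    have h2 := mul_pos hα hwq
    have h3 := mul_nonneg hβ.le (h0 e he)
    simp only [smul_eq_mul] at *
    linarith
  have hab : a ≤ b := (hx.1.trans hx.2).le
  rcases lt_trichotomy q x with h | h | h
  · refine key b (right_mem_Icc.2 hab) ?_
    rw [openSegment_eq_Ioo (h.trans hx.2)]
    exact ⟨h, hx.2⟩
  · rwa [← h]
  · refine key a (left_mem_Icc.2 hab) ?_
    rw [openSegment_symm, openSegment_eq_Ioo (hx.1.trans h)]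
    exact ⟨hx.1, h⟩

lemma volume_hull {S : Finset (Fin 2 → ℤ)} {a b : ℤ} {u v : ℝ → ℝ} (hu : IsTop S a b u)
    (hv : IsTop (S.image reflZ) a b v) (hab : a < b)
    (hpos : ∀ x ∈ Ioo (a : ℝ) b, 0 < u x + v x)
    (iu : IntervalIntegrable u volume a b) (iv : IntervalIntegrable v volume a b) :
    (volume (hull S)).toReal = (∫ x in (a : ℝ)..b, u x) + ∫ x in (a : ℝ)..b, v x := by
  have hab' : (a : ℝ) ≤ b := by exact_mod_cast hab.le
  have h1 : volume (hull S) = volume (interior (hull S)) :=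
    (measure_congr (interior_ae_eq_of_null_frontier
      ((convex_convexHull ℝ _ : Convex ℝ (hull S)).addHaar_frontier volume))).symm
  have h2 : interior (hull S) = (MeasurableEquiv.finTwoArrow : (Fin 2 → ℝ) ≃ᵐ ℝ × ℝ) ⁻¹'
      regionBetween (-v) u (Ioo (a : ℝ) b) := by
    ext p
    rw [mem_interior_hull_iff hu hv]
    rfl
  have hu' := (intervalIntegrable_iff_integrableOn_Ioo_of_le hab').1 iu
  have hv' := (intervalIntegrable_iff_integrableOn_Ioo_of_le hab').1 iv
  rw [h1, h2, (volume_preserving_finTwoArrow ℝ).measure_preimage_equiv, Measure.volume_eq_prod,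
    volume_regionBetween_eq_integral hv'.neg hu' measurableSet_Ioo
      (fun x hx => by rw [Pi.neg_apply]; linarith [hpos x hx]),
    ENNReal.toReal_ofReal, ← intervalIntegral.integral_add iu iv,
    intervalIntegral.integral_of_le hab', integral_Ioc_eq_integral_Ioo]
  · simp
  · exact setIntegral_nonneg measurableSet_Ioo fun x hx => by
      simpa using (hpos x hx).le

/-! ### Counting lattice points by columns -/

/-- Number of lattice points in a finite union of columns; `hfg` allows empty columns, with count
exactly `0`. -/
lemma ncard_columns (K : Finset ℤ) (f g : ℤ → ℤ) {X : Set (Fin 2 → ℤ)}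
    (hX : ∀ n, n ∈ X ↔ n 0 ∈ K ∧ f (n 0) ≤ n 1 ∧ n 1 ≤ g (n 0))
    (hfg : ∀ k ∈ K, f k ≤ g k + 1) :
    X.Finite ∧ (X.ncard : ℝ) = ∑ k ∈ K, ((g k : ℝ) + 1 - f k) := by
  have hinj : Function.Injective (fun s : (Σ _ : ℤ, ℤ) => (![s.1, s.2] : Fin 2 → ℤ)) := by
    rintro ⟨x, y⟩ ⟨z, w⟩ h
    have h0 := congrFun h 0
    have h1 := congrFun h 1
    simp at h0 h1
    simp [h0, h1]
  have hXeq : X = ((K.sigma fun k => Finset.Icc (f k) (g k)).image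
      (fun s : (Σ _ : ℤ, ℤ) => (![s.1, s.2] : Fin 2 → ℤ)) : Finset (Fin 2 → ℤ)) := by
    ext n
    rw [hX]
    simp only [Finset.coe_image, mem_image, Finset.mem_coe, Finset.mem_sigma, Finset.mem_Icc]
    constructor
    · intro h
      exact ⟨⟨n 0, n 1⟩, h, by ext i; fin_cases i <;> rfl⟩
    · rintro ⟨s, hs, rfl⟩
      simpa using hs
  rw [hXeq]
  refine ⟨Finset.finite_toSet _, ?_⟩
  rw [ncard_coe_finset, Finset.card_image_of_injective _ hinj, Finset.card_sigma]
  push_cast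
  refine Finset.sum_congr rfl fun k hk => ?_
  have h1 := Int.toNat_of_nonneg (show 0 ≤ g k + 1 - f k by linarith [hfg k hk])
  rw [Int.card_Icc]
  exact_mod_cast congrArg (fun z : ℤ => (z : ℝ)) h1

end Pick

open Pick in
/-- **Pick's formula**: for a convex lattice polygon `P = convexHull ℝ S` with nonempty
interior, the area `A` of `P` satisfies `A = I + B/2 - 1`, where `I` is the number of
lattice points in the interior of `P` and `B` the number of lattice points in the
frontier of `P`. -/
theorem pick_formula (S : Finset (Fin 2 → ℤ)) (P : Set (Fin 2 → ℝ))
    (hP : P = convexHull ℝ (latticeMap '' (S : Set (Fin 2 → ℤ))))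
    (hne : (interior P).Nonempty)
    (A : ℝ) (hA : A = (volume P).toReal)
    (I B : ℕ)
    (hI : I = {n : Fin 2 → ℤ | latticeMap n ∈ interior P}.ncard)
    (hB : B = {n : Fin 2 → ℤ | latticeMap n ∈ frontier P}.ncard) :
    A = (I : ℝ) + (B : ℝ) / 2 - 1 := by
  change P = hull S at hP
  subst hP
  obtain ⟨q, hq⟩ := hne
  have hS : S.Nonempty := by
    by_contra h
    rw [Finset.not_nonempty_iff_eq_empty] at h
    simp [h, hull] at hq
  have hS' : (S.image reflZ).Nonempty := hS.image _
  obtain ⟨s, hs, hmin⟩ := Finset.exists_min_image S (fun s : Fin 2 → ℤ => s 0) hS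
  obtain ⟨t, ht, hmax⟩ := Finset.exists_max_image S (fun s : Fin 2 → ℤ => s 0) hS
  obtain ⟨a, ha⟩ : ∃ a, s 0 = a := ⟨_, rfl⟩
  obtain ⟨b, hb⟩ : ∃ b, t 0 = b := ⟨_, rfl⟩
  simp only [ha] at hmin
  simp only [hb] at hmax
  have hmin' : ∀ r ∈ S.image reflZ, a ≤ r 0 := by
    simpa [reflZ] using hmin
  have hmax' : ∀ r ∈ S.image reflZ, r 0 ≤ b := by
    simpa [reflZ] using hmax
  have hs' : ∃ r ∈ S.image reflZ, r 0 = a :=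
    ⟨reflZ s, Finset.mem_image_of_mem _ hs, by simp [reflZ, ha]⟩
  have ht' : ∃ r ∈ S.image reflZ, r 0 = b :=
    ⟨reflZ t, Finset.mem_image_of_mem _ ht, by simp [reflZ, hb]⟩
  obtain ⟨u, hu⟩ := exists_isTop hmin hmax ⟨s, hs, ha⟩ ⟨t, ht, hb⟩
  obtain ⟨v, hv⟩ := exists_isTop hmin' hmax' hs' ht'
  obtain ⟨ua, hua⟩ := hu.end_int a 1 (fun r hr => by linarith [hmin r hr]) rfl ⟨s, hs, ha⟩
  obtain ⟨ub, hub⟩ := hu.end_int b (-1) (fun r hr => by linarith [hmax r hr]) rfl ⟨t, ht, hb⟩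
  obtain ⟨va, hva⟩ := hv.end_int a 1 (fun r hr => by linarith [hmin' r hr]) rfl hs'
  obtain ⟨vb, hvb⟩ := hv.end_int b (-1) (fun r hr => by linarith [hmax' r hr]) rfl ht'
  have hmem := mem_hull_iff hu hv
  have hint := mem_interior_hull_iff hu hv
  have hq' := (hint q).1 hq
  have hab' : (a : ℝ) < b := hq'.1.1.trans hq'.1.2
  have hab : a < b := by exact_mod_cast hab'
  have hnn : ∀ x ∈ Icc (a : ℝ) b, 0 ≤ u x + v x := fun x hx => by
    have := ((hmem _).1 (hu.mem x hx)).2.1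
    simp at this
    linarith
  have hpos : ∀ x ∈ Ioo (a : ℝ) b, 0 < u x + v x := fun x hx =>
    concave_pos (w := fun x => u x + v x) (q := q 0) (hu.concave.add hv.concave) hnn (Ioo_subset_Icc_self hq'.1)
      (by linarith [hq'.2.1, hq'.2.2]) hx
  obtain ⟨iu, eu⟩ := hu.integral hS (b - a).toNat a b (by omega) le_rfl hab le_rfl
    ⟨_, hua⟩ ⟨_, hub⟩
  obtain ⟨iv, ev⟩ := hv.integral hS' (b - a).toNat a b (by omega) le_rfl hab le_rfl
    ⟨_, hva⟩ ⟨_, hvb⟩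
  rw [volume_hull hu hv hab hpos iu iv, eu, ev] at hA
  obtain ⟨fT, cT⟩ := ncard_columns (Finset.Icc a b) (fun k => -⌊v k⌋) (fun k => ⌊u k⌋)
    (X := {n | latticeMap n ∈ hull S}) (fun n => by
      rw [mem_ofPred_eq, hmem, Finset.mem_Icc]
      refine and_congr (by simp [latticeMap]) (and_congr ?_ ?_)
      · rw [neg_le, neg_le (a := ⌊_⌋), Int.le_floor]
        simp [latticeMap]
      · rw [Int.le_floor]; simp [latticeMap]) (fun k hk => by
      rw [Finset.mem_Icc] at hk
      have h1 := hnn k ⟨by exact_mod_cast hk.1, by exact_mod_cast hk.2⟩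
      have h2 := Int.lt_floor_add_one (u k)
      have h3 := Int.lt_floor_add_one (v k)
      have h4 : (-1 : ℝ) < ⌊u k⌋ + ⌊v k⌋ + 1 := by linarith
      have h5 : -1 < ⌊u k⌋ + ⌊v k⌋ + 1 := by exact_mod_cast h4
      linarith)
  -- The positive height `u + v` of an inner column makes its count of interior points equal to
  -- `⌈u⌉ + ⌈v⌉ - 1`; for a degenerate column at an integer height this would be `-1`.
  obtain ⟨fI, cI⟩ := ncard_columns (Finset.Ioo a b) (fun k => 1 - ⌈v k⌉) (fun k => ⌈u k⌉ - 1)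
    (X := {n | latticeMap n ∈ interior (hull S)}) (fun n => by
      rw [mem_ofPred_eq, hint, Finset.mem_Ioo]
      refine and_congr (by simp [latticeMap]) (and_congr ?_ ?_)
      · have : 1 - ⌈v (n 0)⌉ ≤ n 1 ↔ -n 1 < ⌈v (n 0)⌉ := by omega
        rw [this, Int.lt_ceil, neg_lt]
        simp [latticeMap]
      · rw [Int.le_sub_one_iff, Int.lt_ceil]; simp [latticeMap]) (fun k hk => by
      rw [Finset.mem_Ioo] at hk
      have h1 := hpos k ⟨by exact_mod_cast hk.1, by exact_mod_cast hk.2⟩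
      have h2 := Int.le_ceil (u k)
      have h3 := Int.le_ceil (v k)
      have h4 : (0 : ℝ) < ⌈u k⌉ + ⌈v k⌉ := by linarith
      have h5 : 0 < ⌈u k⌉ + ⌈v k⌉ := by exact_mod_cast h4
      linarith)
  have hfr : {n : Fin 2 → ℤ | latticeMap n ∈ frontier (hull S)} =
      {n | latticeMap n ∈ hull S} \ {n | latticeMap n ∈ interior (hull S)} := by
    rw [(isCompact_hull S).isClosed.frontier_eq]
    rfl
  have hsub : {n : Fin 2 → ℤ | latticeMap n ∈ interior (hull S)} ⊆
      {n | latticeMap n ∈ hull S} := fun n hn =>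
    show latticeMap n ∈ hull S from interior_subset (s := hull S) hn
  have hsum := ncard_sdiff_add_ncard_of_subset hsub fT
  rw [← hfr, ← hB, ← hI] at hsum
  have hsum' : (B : ℝ) + I = ({n | latticeMap n ∈ hull S} : Set (Fin 2 → ℤ)).ncard := by
    exact_mod_cast hsum
  rw [← hI] at cI
  have hsplit : ∀ f : ℤ → ℝ, ∑ j ∈ Finset.Ico a b, f j = f a + ∑ j ∈ Finset.Ioo a b, f j :=
    fun f => by rw [← Finset.Ioo_insert_left hab, Finset.sum_insert (by simp)]
  rw [sum_Icc_eq_Ico _ hab.le, hsplit] at cT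
  rw [hsplit, hsplit, hua, hub, hva, hvb, rnd_int, rnd_int] at hA
  simp only [hua, hub, hva, hvb, Int.floor_intCast] at cT
  push_cast at cT cI
  -- In an inner column the interior points and all points together number `2 (rnd u + rnd v)`.
  have hcol : ∑ k ∈ Finset.Ioo a b, ((⌊u k⌋ : ℝ) + 1 - -⌊v k⌋) +
      ∑ k ∈ Finset.Ioo a b, ((⌈u k⌉ : ℝ) - 1 + 1 - (1 - ⌈v k⌉)) =
      2 * (∑ k ∈ Finset.Ioo a b, rnd (u k) + ∑ k ∈ Finset.Ioo a b, rnd (v k)) := by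
    rw [← Finset.sum_add_distrib, ← Finset.sum_add_distrib, Finset.mul_sum]
    refine Finset.sum_congr rfl fun k _ => ?_
    simp only [rnd]
    ring
  linarith
end

section
/- Let S ⊆ ℤ² be a finite set of lattice points and let P = convexHull ℝ S ⊆ ℝ² have nonempty interior (a convex lattice polygon). Then I + (B − v)/2 + v/4 = A + (4 − v)/4, where A is the Lebesgue measure of P, I is the number of points of ℤ² in the interior of P, B is the number of points of ℤ² in the frontier of P, and v is the number of extreme points of P. -/
/-!
The terms in `v` cancel, so the claim is Pick's theorem `I + B / 2 = A + 1`. With `L = I + B` the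
number of all lattice points of `P`, it reads `I + L = 2 A + 2` (`SatisfiesPick`).

For a triangle `T` (`satisfiesPick_triangle`), consider the half-open parallelogram spanned by two
edges of `T` at one vertex. It is the disjoint union of `T` minus its two other vertices and of the
point reflection of the interior of `T`. So it has area `2 A` and contains `L - 2 + I` lattice
points. Its area and its number of lattice points agree, both being the index in `ℤ²` of the
sublattice generated by the two edges (`latticeCount_fundamentalDomain`).

The general case (`satisfiesPick_convexHull`) is by induction on a finite set `V` of lattice points
spanning the polygon. If some point of `V` is not extreme, it can be discarded. If `V` consists of
extreme points and has at least four elements, no three of them are collinear, and a sign argument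
(`exists_separating`) yields a line through two points of `V` with further points of `V` on both
sides. This line cuts the polygon into the convex hulls of the points of `V` on either side
(`convexHull_inter_halfPlane`). Both `I + L - 2` and `A` are additive under such a cut
(`satisfiesPick_of_chord`).
-/

open MeasureTheory Set

/-! ### Counting lattice points -/

/-- The number of lattice points in `K` (meaningful for bounded `K`, as `Set.ncard` of an
infinite set is `0`). -/
noncomputable def latticeCount (K : Set (Fin 2 → ℝ)) : ℕ := {n : Fin 2 → ℤ | latticeMap n ∈ K}.ncard

/-- Pick's formula for a closed region: since `L = I + B` counts all lattice points of `P`,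
the formula `I + B / 2 = A + 1` reads `I + L = 2 A + 2`. -/
def SatisfiesPick (P : Set (Fin 2 → ℝ)) : Prop :=
  (latticeCount (interior P) : ℝ) + latticeCount P = 2 * volume.real P + 2

lemma latticeMap_injective : Function.Injective latticeMap := by
  intro m n h
  ext j
  have := congrFun h j
  simpa [latticeMap] using this

lemma finite_latticePoints {K : Set (Fin 2 → ℝ)} (hK : Bornology.IsBounded K) :
    {n : Fin 2 → ℤ | latticeMap n ∈ K}.Finite := by
  obtain ⟨R, hR⟩ := hK.subset_closedBall 0
  refine (Set.finite_Icc (fun _ : Fin 2 => -⌈R⌉) (fun _ => ⌈R⌉)).subset fun n hn => ?_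
  have h1 : ‖latticeMap n‖ ≤ R := by simpa using hR hn
  have h2 : ∀ j, |(n j : ℝ)| ≤ R := fun j => (norm_le_pi_norm (latticeMap n) j).trans h1
  refine ⟨fun j => ?_, fun j => ?_⟩
  · have := (abs_le.1 (h2 j)).1
    have h3 := Int.le_ceil R
    have : (-⌈R⌉ : ℝ) ≤ n j := by linarith
    exact_mod_cast this
  · have := (abs_le.1 (h2 j)).2
    have h3 := Int.le_ceil R
    have : (n j : ℝ) ≤ ⌈R⌉ := by linarith
    exact_mod_cast this

lemma latticeCount_union {K L : Set (Fin 2 → ℝ)} (hK : Bornology.IsBounded K)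
    (hL : Bornology.IsBounded L) (h : Disjoint K L) :
    latticeCount (K ∪ L) = latticeCount K + latticeCount L := by
  refine Set.ncard_union_eq ?_ (finite_latticePoints hK) (finite_latticePoints hL)
  exact Set.disjoint_left.2 fun n hn hn' => Set.disjoint_left.1 h hn hn'

lemma latticeCount_union_add_inter {K L : Set (Fin 2 → ℝ)} (hK : Bornology.IsBounded K)
    (hL : Bornology.IsBounded L) :
    latticeCount (K ∪ L) + latticeCount (K ∩ L) = latticeCount K + latticeCount L :=
  Set.ncard_union_add_ncard_inter _ _ (finite_latticePoints hK) (finite_latticePoints hL)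

lemma latticeCount_insert {K : Set (Fin 2 → ℝ)} (hK : Bornology.IsBounded K) {p : Fin 2 → ℝ}
    (hp : p ∈ range latticeMap) (hpK : p ∉ K) :
    latticeCount (insert p K) = latticeCount K + 1 := by
  obtain ⟨m, rfl⟩ := hp
  rw [latticeCount, latticeCount, ← Set.ncard_insert_of_notMem (a := m) (by simpa using hpK)
    (finite_latticePoints hK)]
  congr 1
  ext n
  simp [latticeMap_injective.eq_iff]

/-- For a lattice point `p`, the point reflection `x ↦ p - x` (in `p / 2`) preserves the lattice. -/
lemma latticeCount_preimage_const_sub (K : Set (Fin 2 → ℝ)) {p : Fin 2 → ℝ}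
    (hp : p ∈ range latticeMap) : latticeCount ((fun x => p - x) ⁻¹' K) = latticeCount K := by
  obtain ⟨m, rfl⟩ := hp
  have key : ∀ n, latticeMap (m - n) = latticeMap m - latticeMap n := fun n => by
    ext j; simp [latticeMap]
  refine Set.ncard_congr (fun n _ => m - n) (fun n hn => ?_) (fun a b _ _ h => by simpa using h)
    (fun n hn => ⟨m - n, ?_, by simp⟩)
  · simpa [key] using hn
  · simpa [key] using hn

lemma latticeCount_preimage_sub_const (K : Set (Fin 2 → ℝ)) {p : Fin 2 → ℝ}
    (hp : p ∈ range latticeMap) : latticeCount ((fun x => x - p) ⁻¹' K) = latticeCount K := by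
  obtain ⟨m, rfl⟩ := hp
  have key : ∀ n, latticeMap (n - m) = latticeMap n - latticeMap m := fun n => by
    ext j; simp [latticeMap]
  refine Set.ncard_congr (fun n _ => n - m) (fun n hn => ?_) (fun a b _ _ h => by simpa using h)
    (fun n hn => ⟨n + m, ?_, by simp⟩)
  · simpa [key] using hn
  · have : latticeMap (n + m) - latticeMap m = latticeMap n := by rw [← key]; simp
    simpa [this] using hn

lemma mem_span_basisFun_iff {x : Fin 2 → ℝ} :
    x ∈ Submodule.span ℤ (range (Pi.basisFun ℝ (Fin 2))) ↔ x ∈ range latticeMap := by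
  rw [Module.Basis.mem_span_iff_repr_mem]
  constructor
  · intro h
    choose n hn using h
    exact ⟨n, by ext j; simpa [latticeMap] using hn j⟩
  · rintro ⟨n, rfl⟩ j
    exact ⟨n j, by simp [latticeMap]⟩

/-- A half-open fundamental parallelogram of a sublattice `Λ ⊆ ℤ²` contains as many lattice points
as its area: both numbers are the index of `Λ` in `ℤ²`. -/
lemma latticeCount_fundamentalDomain {ι : Type*} [Fintype ι] (e : Module.Basis ι ℝ (Fin 2 → ℝ))
    (he : ∀ i, e i ∈ range latticeMap) :
    (latticeCount (ZSpan.fundamentalDomain e) : ℝ) = volume.real (ZSpan.fundamentalDomain e) := by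
  classical
  set L₂ := Submodule.span ℤ (range (Pi.basisFun ℝ (Fin 2)))
  set L₁ := Submodule.span ℤ (range e)
  have hle : L₁ ≤ L₂ := Submodule.span_le.2 (by
    rintro _ ⟨i, rfl⟩
    exact mem_span_basisFun_iff.2 (he i))
  have h := ZLattice.covolume_div_covolume_eq_relIndex L₁ L₂ hle
  rw [ZLattice.covolume_eq_measure_fundamentalDomain L₁ volume
      (ZSpan.isAddFundamentalDomain e volume),
    ZLattice.covolume_eq_measure_fundamentalDomain L₂ volume
      (ZSpan.isAddFundamentalDomain (Pi.basisFun ℝ (Fin 2)) volume),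
    ZSpan.volume_real_fundamentalDomain (Pi.basisFun ℝ (Fin 2))] at h
  have h1 : |(Matrix.of (Pi.basisFun ℝ (Fin 2))).det| = 1 := by
    simp [Matrix.det_fin_two]
  rw [h1, div_one] at h
  rw [h]
  norm_cast
  rw [AddSubgroup.relIndex, AddSubgroup.index, latticeCount, ← Nat.card_coe_set_eq]
  -- send a lattice point of the fundamental domain to its class modulo `L₁`
  let φ : {n : Fin 2 → ℤ | latticeMap n ∈ ZSpan.fundamentalDomain e} →
      L₂.toAddSubgroup ⧸ L₁.toAddSubgroup.addSubgroupOf L₂.toAddSubgroup :=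
    fun n => QuotientAddGroup.mk ⟨latticeMap n, mem_span_basisFun_iff.2 ⟨n, rfl⟩⟩
  refine Nat.card_eq_of_bijective φ ⟨?_, ?_⟩
  · rintro ⟨m, hm⟩ ⟨n, hn⟩ hmn
    have h2 : -latticeMap m + latticeMap n ∈ L₁ := by
      have := QuotientAddGroup.eq.1 hmn
      simpa [AddSubgroup.mem_addSubgroupOf] using this
    rw [← ZSpan.fract_eq_fract, ZSpan.fract_eq_self.2 hm, ZSpan.fract_eq_self.2 hn] at h2
    exact Subtype.ext (latticeMap_injective h2)
  · intro q
    obtain ⟨⟨x, hx⟩, rfl⟩ := QuotientAddGroup.mk_surjective q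
    have hf : ZSpan.fract e x ∈ L₂ :=
      L₂.sub_mem hx (hle (ZSpan.floor e x).2)
    obtain ⟨n, hn⟩ := mem_span_basisFun_iff.1 hf
    refine ⟨⟨n, by simp only [mem_ofPred_eq, hn]; exact ZSpan.fract_mem_fundamentalDomain e x⟩, ?_⟩
    refine QuotientAddGroup.eq.2 ?_
    rw [AddSubgroup.mem_addSubgroupOf]
    simp only [AddSubgroup.coe_add, AddSubgroup.coe_neg, hn]
    change -ZSpan.fract e x + x ∈ L₁
    rw [← ZSpan.fract_eq_fract, ZSpan.fract_fract]

/-! ### Triangles -/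

/-- The linear coordinates based at the vertex `β i` are the barycentric coordinates other than
the `i`-th. -/
lemma AffineBasis.basisOf_repr_eq_coord {ι E : Type*} [AddCommGroup E] [Module ℝ E]
    (β : AffineBasis ι ℝ E) {i : ι} (j : {j : ι // j ≠ i}) (x : E) :
    (β.basisOf i).repr (x - β i) j = β.coord j x := by
  have h : (β.coord j).linear = (β.basisOf i).coord j := by
    refine (β.basisOf i).ext fun k => ?_
    rw [β.basisOf_apply, AffineMap.linearMap_vsub, vsub_eq_sub, β.coord_apply_ne j.2, sub_zero]
    classical
    rw [β.coord_apply, ← β.basisOf_apply, Module.Basis.coord_apply, Module.Basis.repr_self,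
      Finsupp.single_apply]
    simp only [Subtype.ext_iff, eq_comm]
  rw [← Module.Basis.coord_apply, ← h, ← vsub_eq_sub, AffineMap.linearMap_vsub,
    β.coord_apply_ne j.2, vsub_eq_sub, sub_zero]

private lemma triangle_aux {p q r : ℝ} (h : p + q + r = 1) :
    ((0 ≤ p ∧ 0 ≤ q ∧ 0 ≤ r) ∨ (p < 0 ∧ q < 1 ∧ r < 1)) ↔
      ((q = 1 ∧ p = 0 ∧ r = 0) ∨ (r = 1 ∧ p = 0 ∧ q = 0) ∨
        (0 ≤ q ∧ q < 1) ∧ (0 ≤ r ∧ r < 1)) := by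
  constructor
  · rintro (⟨hp, hq, hr⟩ | ⟨hp, hq, hr⟩)
    · by_cases hq1 : q < 1
      · by_cases hr1 : r < 1
        · exact Or.inr (Or.inr ⟨⟨hq, hq1⟩, hr, hr1⟩)
        · refine Or.inr (Or.inl ⟨?_, ?_, ?_⟩) <;> linarith
      · refine Or.inl ⟨?_, ?_, ?_⟩ <;> linarith
    · refine Or.inr (Or.inr ⟨⟨?_, hq⟩, ?_, hr⟩) <;> linarith
  · rintro (⟨hq, hp, hr⟩ | ⟨hr, hp, hq⟩ | ⟨⟨hq, hq1⟩, hr, hr1⟩)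
    · refine Or.inl ⟨?_, ?_, ?_⟩ <;> linarith
    · refine Or.inl ⟨?_, ?_, ?_⟩ <;> linarith
    · by_cases hp : 0 ≤ p
      · exact Or.inl ⟨hp, hq, hr⟩
      · exact Or.inr ⟨not_le.1 hp, hq1, hr1⟩

/-- Pick's formula for triangles. The half-open parallelogram spanned at the vertex `β 0` is the
disjoint union of the triangle `T` without its two other vertices and of the point reflection of
the interior of `T`. Hence it contains `L - 2 + I` lattice points and has area `2 A`. -/
lemma satisfiesPick_triangle (β : AffineBasis (Fin 3) ℝ (Fin 2 → ℝ))
    (hβ : ∀ i, β i ∈ range latticeMap) : SatisfiesPick (convexHull ℝ (range β)) := by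
  classical
  set T := convexHull ℝ (range β) with hT
  have hTb : Bornology.IsBounded T := (isBounded_convexHull).2 (finite_range β).isBounded
  have hmem : ∀ x, x ∈ T ↔ ∀ i, 0 ≤ β.coord i x := fun x => by
    rw [hT, β.convexHull_eq_nonneg_coord]; rfl
  have hint : ∀ x, x ∈ interior T ↔ ∀ i, 0 < β.coord i x := fun x => by
    rw [hT, β.interior_convexHull]; rfl
  have hsum : ∀ x, β.coord 0 x + β.coord 1 x + β.coord 2 x = 1 := fun x => by
    rw [← Fin.sum_univ_three (fun i => β.coord i x), β.sum_coord_apply_eq_one]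
  have hrefl : ∀ i x, β.coord i (β 1 + β 2 - x) = β.coord i (β 1) + β.coord i (β 2)
      - β.coord i x := fun i x => by
    have : β 1 + β 2 - x = (β 1 -ᵥ x) +ᵥ β 2 := by simp; abel
    rw [this, AffineMap.map_vadd, AffineMap.linearMap_vsub]
    simp; ring
  have hvert : ∀ j x, x = β j ↔ β.coord j x = 1 ∧ ∀ i, i ≠ j → β.coord i x = 0 := by
    intro j x
    constructor
    · rintro rfl
      exact ⟨β.coord_apply_eq j, fun i hi => β.coord_apply_ne hi⟩
    · rintro ⟨h1, h2⟩
      refine β.ext_elem fun i => ?_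
      rcases eq_or_ne i j with rfl | h
      · rw [h1, β.coord_apply_eq]
      · rw [h2 i h, β.coord_apply_ne h]
  set e := β.basisOf 0
  set H : Set (Fin 2 → ℝ) := (fun x => x - β 0) ⁻¹' ZSpan.fundamentalDomain e with hH
  have hHmem : ∀ x, x ∈ H ↔ (0 ≤ β.coord 1 x ∧ β.coord 1 x < 1) ∧
      (0 ≤ β.coord 2 x ∧ β.coord 2 x < 1) := by
    intro x
    simp only [hH, mem_preimage, ZSpan.mem_fundamentalDomain, e, β.basisOf_repr_eq_coord, mem_Ico]
    constructor
    · intro h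
      exact ⟨h ⟨1, by decide⟩, h ⟨2, by decide⟩⟩
    · rintro ⟨h1, h2⟩ ⟨j, hj⟩
      fin_cases j
      · exact absurd rfl hj
      · exact h1
      · exact h2
  set R : Set (Fin 2 → ℝ) := (fun x => β 1 + β 2 - x) ⁻¹' interior T with hR
  have hRmem : ∀ x, x ∈ R ↔ β.coord 0 x < 0 ∧ β.coord 1 x < 1 ∧ β.coord 2 x < 1 := by
    intro x
    simp only [hR, mem_preimage, hint, hrefl, β.coord_apply, Fin.forall_fin_succ]
    simp
  have h12 : β 1 ∉ insert (β 2) H := by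
    simp [hHmem, (β.ind.injective.ne_iff (x := 1) (y := 2))]
  have h2H : β 2 ∉ H := by simp [hHmem]
  -- `T` together with the reflected open triangle is the half-open parallelogram with two
  -- further corners.
  have hunion : T ∪ R = insert (β 1) (insert (β 2) H) := by
    ext x
    have hs := hsum x
    have h1 : x = β 1 ↔ β.coord 1 x = 1 ∧ β.coord 0 x = 0 ∧ β.coord 2 x = 0 := by
      rw [hvert]; simp [Fin.forall_fin_succ]
    have h2 : x = β 2 ↔ β.coord 2 x = 1 ∧ β.coord 0 x = 0 ∧ β.coord 1 x = 0 := by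
      rw [hvert]; simp [Fin.forall_fin_succ]
    have h3 : x ∈ T ↔ 0 ≤ β.coord 0 x ∧ 0 ≤ β.coord 1 x ∧ 0 ≤ β.coord 2 x := by
      rw [hmem]; simp [Fin.forall_fin_succ]
    rw [mem_union, mem_insert_iff, mem_insert_iff, h1, h2, h3, hRmem, hHmem]
    exact triangle_aux hs
  have hdisj : Disjoint T R := by
    rw [Set.disjoint_left]
    intro x h1 h2
    exact absurd ((hmem x).1 h1 0) (not_le.2 ((hRmem x).1 h2).1)
  have hHb : Bornology.IsBounded (T ∪ R) := by
    refine hTb.union ?_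
    obtain ⟨r, hr⟩ := hTb.subset_closedBall 0
    refine (Metric.isBounded_closedBall (x := 0) (r := ‖β 1 + β 2‖ + r)).subset fun x hx => ?_
    have h1 : ‖β 1 + β 2 - x‖ ≤ r := by simpa using hr (interior_subset hx)
    have h2 : ‖x‖ ≤ ‖β 1 + β 2‖ + ‖β 1 + β 2 - x‖ := by
      simpa using norm_sub_le (β 1 + β 2) (β 1 + β 2 - x)
    simpa using h2.trans (by gcongr)
  have hcard : latticeCount T + latticeCount (interior T) =
      latticeCount (ZSpan.fundamentalDomain e) + 2 := by
    have hsumlat : β 1 + β 2 ∈ range latticeMap := by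
      obtain ⟨m, hm⟩ := hβ 1
      obtain ⟨n, hn⟩ := hβ 2
      exact ⟨m + n, by rw [← hm, ← hn]; ext j; simp [latticeMap]⟩
    rw [← latticeCount_preimage_const_sub (interior T) hsumlat, ← hR,
      ← latticeCount_union hTb (hHb.subset subset_union_right) hdisj, hunion,
      latticeCount_insert (hHb.subset (by rw [hunion]; exact subset_insert _ _)) (hβ 1) h12,
      latticeCount_insert (hHb.subset (by
        rw [hunion]; exact (subset_insert _ _).trans (subset_insert _ _))) (hβ 2) h2H,
      hH, latticeCount_preimage_sub_const _ (hβ 0)]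
  have hvol : 2 * volume.real T = volume.real (ZSpan.fundamentalDomain e) := by
    have hTint : volume (interior T) = volume T :=
      measure_congr (interior_ae_eq_of_null_frontier
        ((convex_convexHull ℝ _).addHaar_frontier volume))
    have hRvol : volume R = volume T := by
      rw [hR, (Measure.measurePreserving_sub_left volume (β 1 + β 2)).measure_preimage
        isOpen_interior.measurableSet.nullMeasurableSet, hTint]
    have hHvol : volume H = volume (ZSpan.fundamentalDomain e) := by
      rw [hH, (measurePreserving_sub_right volume (β 0)).measure_preimage
        (ZSpan.fundamentalDomain_measurableSet e).nullMeasurableSet]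
    have hRm : MeasurableSet R := by
      rw [hR]
      exact (isOpen_interior.preimage (by fun_prop)).measurableSet
    rw [measureReal_def, measureReal_def, ← hHvol]
    have h3 : volume H = volume T + volume T := by
      nth_rewrite 2 [← hRvol]
      rw [← measure_union hdisj hRm, hunion,
        measure_congr (insert_ae_eq_self _ _), measure_congr (insert_ae_eq_self _ _)]
    rw [h3, ENNReal.toReal_add hTb.measure_lt_top.ne hTb.measure_lt_top.ne]
    ring
  have he : ∀ i, e i ∈ range latticeMap := fun i => by
    obtain ⟨m, hm⟩ := hβ i
    obtain ⟨n, hn⟩ := hβ 0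
    refine ⟨m - n, ?_⟩
    rw [β.basisOf_apply, ← hm, ← hn]
    ext j; simp [latticeMap]
  have hmain := latticeCount_fundamentalDomain e he
  rw [SatisfiesPick, hvol, ← hmain]
  have : (latticeCount T : ℝ) + latticeCount (interior T) =
    latticeCount (ZSpan.fundamentalDomain e) + 2 := by exact_mod_cast hcard
  linarith

/-! ### Lines through two vertices -/

/-- Twice the signed area of the triangle `a b x`; as a function of `x`, an affine form that
vanishes on the line `a b`. -/
def orient (a b x : Fin 2 → ℝ) : ℝ := (b 0 - a 0) * (x 1 - a 1) - (b 1 - a 1) * (x 0 - a 0)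

lemma orient_swap (a b x : Fin 2 → ℝ) : orient b a x = -orient a b x := by
  simp only [orient]; ring

lemma orient_combo (a b x y : Fin 2 → ℝ) {s t : ℝ} (h : s + t = 1) :
    orient a b (s • x + t • y) = s * orient a b x + t * orient a b y := by
  obtain rfl : s = 1 - t := by linarith
  simp only [orient, Pi.add_apply, Pi.smul_apply, smul_eq_mul]; ring

lemma orient_left (a b : Fin 2 → ℝ) : orient a b a = 0 := by simp [orient]

lemma orient_right (a b : Fin 2 → ℝ) : orient a b b = 0 := by simp only [orient]; ring

lemma continuous_orient (a b : Fin 2 → ℝ) : Continuous (orient a b) := by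
  unfold orient; fun_prop

lemma convex_nonneg_orient (a b : Fin 2 → ℝ) : Convex ℝ {x | 0 ≤ orient a b x} := by
  intro x hx y hy s t hs ht hst
  simp only [mem_ofPred_eq] at *
  rw [orient_combo _ _ _ _ hst]
  positivity

lemma exists_lineMap_of_orient_eq_zero {a b x : Fin 2 → ℝ} (hab : a ≠ b)
    (hx : orient a b x = 0) : ∃ t : ℝ, x = AffineMap.lineMap a b t := by
  simp only [orient] at hx
  by_cases h : b 0 = a 0
  · have h1 : b 1 - a 1 ≠ 0 := fun h1 => hab (by
      ext j; fin_cases j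
      · exact h.symm
      · simpa using (sub_eq_zero.1 h1).symm)
    refine ⟨(x 1 - a 1) / (b 1 - a 1), ?_⟩
    have h2 : x 0 - a 0 = 0 := by
      have : (b 1 - a 1) * (x 0 - a 0) = 0 := by rw [h] at hx; linarith
      exact (mul_eq_zero.1 this).resolve_left h1
    ext j; fin_cases j
    · simp [AffineMap.lineMap_apply, h]; linarith
    · simp [AffineMap.lineMap_apply, div_mul_cancel₀ _ h1]
  · have h1 : b 0 - a 0 ≠ 0 := sub_ne_zero.2 h
    refine ⟨(x 0 - a 0) / (b 0 - a 0), ?_⟩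
    ext j; fin_cases j
    · simp [AffineMap.lineMap_apply, div_mul_cancel₀ _ h1]
    · simp [AffineMap.lineMap_apply]
      field_simp
      linarith

lemma interior_nonneg_orient {a b : Fin 2 → ℝ} (hab : a ≠ b) :
    interior {x | 0 ≤ orient a b x} = {x | 0 < orient a b x} := by
  let g : (Fin 2 → ℝ) →L[ℝ] ℝ := (b 0 - a 0) • ContinuousLinearMap.proj 1 -
    (b 1 - a 1) • ContinuousLinearMap.proj 0
  have hg : ∀ x, orient a b x = g x - g a := fun x => by
    simp [g, orient]; ring
  have hsurj : Function.Surjective g := by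
    refine LinearMap.surjective (f := (g : (Fin 2 → ℝ) →ₗ[ℝ] ℝ)) fun h0 => hab ?_
    have h1 := LinearMap.congr_fun h0 (Pi.single 1 1)
    have h2 := LinearMap.congr_fun h0 (Pi.single 0 1)
    simp [g] at h1 h2
    ext j; fin_cases j
    · simp; linarith
    · simp; linarith
  have h1 : {x | 0 ≤ orient a b x} = g ⁻¹' Ici (g a) := by ext x; simp [hg]
  have h2 : {x | 0 < orient a b x} = g ⁻¹' Ioi (g a) := by ext x; simp [hg]
  rw [h1, h2, g.interior_preimage hsurj, interior_Ici]

/-- A line through two extreme points `a`, `b` of a convex set meets it in the segment `[a, b]`. -/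
lemma inter_line_eq_segment {P : Set (Fin 2 → ℝ)} (hP : Convex ℝ P) {a b : Fin 2 → ℝ}
    (ha : a ∈ P.extremePoints ℝ) (hb : b ∈ P.extremePoints ℝ) (hab : a ≠ b) :
    P ∩ {x | orient a b x = 0} = segment ℝ a b := by
  apply Subset.antisymm
  · rintro x ⟨hxP, hx⟩
    obtain ⟨t, rfl⟩ := exists_lineMap_of_orient_eq_zero hab hx
    rw [segment_eq_image_lineMap]
    refine ⟨t, ⟨?_, ?_⟩, rfl⟩
    · by_contra! ht
      -- otherwise `a` lies strictly between `x` and `b`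
      refine hab ((mem_extremePoints.1 ha).2 _ hxP b hb.1 ?_).2.symm
      have : 1 - t ≠ 0 := by linarith
      refine ⟨1 / (1 - t), -t / (1 - t), by apply div_pos <;> linarith,
        by apply div_pos <;> linarith, by field_simp; ring, ?_⟩
      ext j
      simp [AffineMap.lineMap_apply]
      field_simp
      ring
    · by_contra! ht
      -- otherwise `b` lies strictly between `a` and `x`
      refine hab ((mem_extremePoints.1 hb).2 a ha.1 _ hxP ?_).1
      have : t ≠ 0 := by linarith
      refine ⟨(t - 1) / t, 1 / t, by apply div_pos <;> linarith,
        by apply div_pos <;> linarith, by field_simp; ring, ?_⟩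
      ext j
      simp [AffineMap.lineMap_apply]
      field_simp
      ring
  · intro x hx
    refine ⟨hP.segment_subset ha.1 hb.1 hx, ?_⟩
    obtain ⟨s, t, _, _, hst, rfl⟩ := hx
    simp [orient_combo _ _ _ _ hst, orient_left, orient_right]

/-- If a convex body has points on both sides of the chord `[a, b]` between two of its extreme
points, then the interior of the body meets the chord in the open segment. -/
lemma interior_inter_line_eq_openSegment {P : Set (Fin 2 → ℝ)} (hP : Convex ℝ P)
    {a b : Fin 2 → ℝ} (ha : a ∈ P.extremePoints ℝ) (hb : b ∈ P.extremePoints ℝ) (hab : a ≠ b)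
    {c d : Fin 2 → ℝ} (hc : c ∈ interior P) (hd : d ∈ interior P) (hc0 : 0 < orient a b c)
    (hd0 : orient a b d < 0) :
    interior P ∩ {x | orient a b x = 0} = openSegment ℝ a b := by
  have hdis : ∀ x ∈ interior P, x ∉ P.extremePoints ℝ := fun x hx hx' =>
    Set.disjoint_left.1 (disjoint_interior_extremePoints P) hx hx'
  have hsub : interior P ∩ {x | orient a b x = 0} ⊆ openSegment ℝ a b := by
    rintro x ⟨hx, hx0⟩
    have hxs : x ∈ segment ℝ a b := by
      rw [← inter_line_eq_segment hP ha hb hab]; exact ⟨interior_subset hx, hx0⟩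
    refine mem_openSegment_of_ne_left_right ?_ ?_ hxs
    · rintro rfl; exact hdis _ hx ha
    · rintro rfl; exact hdis _ hx hb
  refine hsub.antisymm ?_
  -- the point of `[c, d]` on the line
  obtain ⟨q, hq, hq0⟩ : ∃ q ∈ interior P, orient a b q = 0 := by
    have hpos : 0 < orient a b c - orient a b d := by linarith
    have hsum : -orient a b d / (orient a b c - orient a b d) +
        orient a b c / (orient a b c - orient a b d) = 1 := by field_simp; ring
    refine ⟨(-orient a b d / (orient a b c - orient a b d)) • c +
      (orient a b c / (orient a b c - orient a b d)) • d,
      hP.interior hc hd (div_nonneg (by linarith) hpos.le) (div_nonneg hc0.le hpos.le) hsum, ?_⟩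
    rw [orient_combo _ _ _ _ hsum]
    field_simp
    ring
  have hqs := hsub ⟨hq, hq0⟩
  intro x hx
  refine ⟨?_, ?_⟩
  · rw [openSegment_eq_image_lineMap] at hqs
    obtain ⟨t, -, rfl⟩ := hqs
    rcases openSegment_subset_union a b (mem_range_self t) hx with rfl | h | h
    · exact hq
    · exact hP.openSegment_self_interior_subset_interior ha.1 hq h
    · exact hP.openSegment_interior_self_subset_interior hq hb.1 h
  · exact ((inter_line_eq_segment hP ha hb hab).ge (openSegment_subset_segment ℝ a b hx)).2

/-- Cutting a lattice polygon along a chord `[a, b]`, the half on the nonnegative side of `a b` is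
the convex hull of the given points on that side. -/
lemma convexHull_inter_halfPlane {V : Finset (Fin 2 → ℝ)} {a b : Fin 2 → ℝ} (haV : a ∈ V)
    (hbV : b ∈ V) (ha : a ∈ (convexHull ℝ (V : Set (Fin 2 → ℝ))).extremePoints ℝ)
    (hb : b ∈ (convexHull ℝ (V : Set (Fin 2 → ℝ))).extremePoints ℝ) (hab : a ≠ b) :
    convexHull ℝ (V : Set (Fin 2 → ℝ)) ∩ {x | 0 ≤ orient a b x} =
      convexHull ℝ ({x ∈ V | 0 ≤ orient a b x} : Set (Fin 2 → ℝ)) := by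
  set P := convexHull ℝ (V : Set (Fin 2 → ℝ)) with hPdef
  set V₁ : Set (Fin 2 → ℝ) := {x ∈ V | 0 ≤ orient a b x}
  set V₂ : Set (Fin 2 → ℝ) := {x ∈ V | 0 ≤ orient b a x}
  have hPc : Convex ℝ P := convex_convexHull ℝ _
  have haV₁ : a ∈ V₁ := ⟨haV, (orient_left a b).ge⟩
  have hbV₁ : b ∈ V₁ := ⟨hbV, (orient_right a b).ge⟩
  have haV₂ : a ∈ V₂ := ⟨haV, (orient_right b a).ge⟩
  have hK : Convex ℝ (convexHull ℝ V₁) := convex_convexHull ℝ _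
  have hline : ∀ z ∈ P, orient a b z = 0 → z ∈ convexHull ℝ V₁ := fun z hz hz0 => by
    have : z ∈ segment ℝ a b := by
      rw [← inter_line_eq_segment hPc ha hb hab]; exact ⟨hz, hz0⟩
    exact hK.segment_subset (subset_convexHull ℝ _ haV₁) (subset_convexHull ℝ _ hbV₁) this
  have hsub₁ : convexHull ℝ V₁ ⊆ P ∩ {x | 0 ≤ orient a b x} :=
    convexHull_min (fun x hx => ⟨subset_convexHull ℝ _ hx.1, hx.2⟩)
      (hPc.inter (convex_nonneg_orient a b))
  have hsub₂ : convexHull ℝ V₂ ⊆ P ∩ {x | 0 ≤ orient b a x} :=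
    convexHull_min (fun x hx => ⟨subset_convexHull ℝ _ hx.1, hx.2⟩)
      (hPc.inter (convex_nonneg_orient b a))
  refine Subset.antisymm ?_ hsub₁
  rintro x ⟨hxP, hx0⟩
  simp only [mem_ofPred_eq] at hx0
  have hV : (V : Set (Fin 2 → ℝ)) = V₁ ∪ V₂ := by
    ext y
    simp only [V₁, V₂, orient_swap a b, mem_union, mem_ofPred_eq, SetLike.mem_coe]
    constructor
    · intro h
      rcases le_total 0 (orient a b y) with h' | h'
      · exact Or.inl ⟨h, h'⟩
      · exact Or.inr ⟨h, by linarith⟩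
    · rintro (h | h) <;> exact h.1
  have hx' := hxP
  rw [hPdef, hV, convexHull_union ⟨a, haV₁⟩ ⟨a, haV₂⟩, mem_convexJoin] at hx'
  obtain ⟨p, hp, q, hq, s, t, hs, ht, hst, rfl⟩ := hx'
  have hp0 : 0 ≤ orient a b p := (hsub₁ hp).2
  have hq0 : orient a b q ≤ 0 := by
    have : 0 ≤ orient b a q := (hsub₂ hq).2
    rw [orient_swap] at this; linarith
  rcases hx0.eq_or_lt with hx0 | hx0
  · exact hline _ hxP hx0.symm
  rcases hq0.eq_or_lt with hq0 | hq0
  · exact hK hp (hline q (hsub₂ hq).1 hq0) hs ht hst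
  -- `z` is the point of `[p, q]` on the line `a b`
  set α := orient a b p
  set γ := orient a b q
  rw [orient_combo _ _ _ _ hst] at hx0
  have hpos : 0 < α - γ := by linarith
  have hsum : -γ / (α - γ) + α / (α - γ) = 1 := by field_simp; ring
  have hz : (-γ / (α - γ)) • p + (α / (α - γ)) • q ∈ convexHull ℝ V₁ := by
    refine hline _ (hPc (hsub₁ hp).1 (hsub₂ hq).1 (div_nonneg (by linarith) hpos.le)
      (div_nonneg hp0 hpos.le) hsum) ?_
    rw [orient_combo _ _ _ _ hsum]
    change -γ / (α - γ) * α + α / (α - γ) * γ = 0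
    field_simp
    ring
  have hα : 0 < α := by
    rcases hp0.eq_or_lt with h | h
    · exfalso
      have : s * α + t * γ ≤ 0 := by
        rw [← h]; nlinarith
      linarith
    · exact h
  have hx1 : 0 < s * α + t * γ := hx0
  have key : s • p + t • q = ((s * α + t * γ) / α) • p +
      (t * (α - γ) / α) • ((-γ / (α - γ)) • p + (α / (α - γ)) • q) := by
    ext j
    simp only [Pi.add_apply, Pi.smul_apply, smul_eq_mul]
    field_simp
    ring
  rw [key]
  refine hK hp hz (by positivity) (by positivity) ?_
  obtain rfl : s = 1 - t := by linarith
  field_simp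
  ring

/-! ### Cutting along a chord -/

/-- `I + L - 2` is additive under cutting a convex body along a chord `[a, b]` with lattice
endpoints: the `k` lattice points of the chord, counted once in `L` and `k - 2` times in `I`, are
counted twice by the two halves in `L` and not at all in `I`. -/
lemma satisfiesPick_of_chord {P : Set (Fin 2 → ℝ)} (hP : Convex ℝ P) (hPc : IsCompact P)
    {a b : Fin 2 → ℝ} (hab : a ≠ b) (ha : a ∈ range latticeMap) (hb : b ∈ range latticeMap)
    (hseg : P ∩ {x | orient a b x = 0} = segment ℝ a b)
    (hopen : interior P ∩ {x | orient a b x = 0} = openSegment ℝ a b)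
    (h₁ : SatisfiesPick (P ∩ {x | 0 ≤ orient a b x}))
    (h₂ : SatisfiesPick (P ∩ {x | 0 ≤ orient b a x})) : SatisfiesPick P := by
  set P₁ := P ∩ {x | 0 ≤ orient a b x} with hP₁
  set P₂ := P ∩ {x | 0 ≤ orient b a x} with hP₂
  have hb0 := hPc.isBounded
  have hb1 : Bornology.IsBounded P₁ := hb0.subset inter_subset_left
  have hb2 : Bornology.IsBounded P₂ := hb0.subset inter_subset_left
  have hi1 : interior P₁ = interior P ∩ {x | 0 < orient a b x} := by
    rw [hP₁, interior_inter, interior_nonneg_orient hab]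
  have hi2 : interior P₂ = interior P ∩ {x | orient a b x < 0} := by
    rw [hP₂, interior_inter, interior_nonneg_orient hab.symm]
    simp [orient_swap a b]
  have hU : P₁ ∪ P₂ = P := by
    rw [hP₁, hP₂, ← inter_union_distrib_left, inter_eq_left]
    intro x _
    simp only [mem_union, mem_ofPred_eq, orient_swap a b]
    rcases le_total 0 (orient a b x) with h | h
    · exact Or.inl h
    · exact Or.inr (by linarith)
  have hI : P₁ ∩ P₂ = segment ℝ a b := by
    rw [← hseg]
    ext x
    simp only [hP₁, hP₂, mem_inter_iff, mem_ofPred_eq, orient_swap a b]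
    constructor
    · rintro ⟨⟨h, h1⟩, -, h2⟩
      exact ⟨h, by linarith⟩
    · rintro ⟨h, h1⟩
      exact ⟨⟨h, h1.ge⟩, h, by linarith⟩
  have hsegb : Bornology.IsBounded (segment ℝ a b) := by
    rw [← hI]; exact hb1.subset inter_subset_left
  have hopb : Bornology.IsBounded (openSegment ℝ a b) :=
    hsegb.subset (openSegment_subset_segment ℝ a b)
  have hL : latticeCount P + latticeCount (segment ℝ a b) = latticeCount P₁ + latticeCount P₂ := by
    rw [← latticeCount_union_add_inter hb1 hb2, hU, hI]
  have hS : latticeCount (segment ℝ a b) = latticeCount (openSegment ℝ a b) + 2 := by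
    have ha' : a ∉ insert b (openSegment ℝ a b) := by
      rw [mem_insert_iff, not_or]
      exact ⟨hab, fun h => hab (left_mem_openSegment_iff.1 h)⟩
    have hb' : b ∉ openSegment ℝ a b := fun h => hab (right_mem_openSegment_iff.1 h)
    have hins : insert b (openSegment ℝ a b) ⊆ segment ℝ a b :=
      insert_subset (right_mem_segment ℝ a b) (openSegment_subset_segment ℝ a b)
    rw [← insert_endpoints_openSegment, latticeCount_insert (hsegb.subset hins) ha ha',
      latticeCount_insert hopb hb hb']
  have hInt : latticeCount (interior P) = latticeCount (interior P₁) +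
      latticeCount (interior P₂) + latticeCount (openSegment ℝ a b) := by
    have hb1' := hb1.subset (interior_subset (s := P₁))
    have hb2' := hb2.subset (interior_subset (s := P₂))
    rw [← latticeCount_union hb1' hb2', ← latticeCount_union (hb1'.union hb2') hopb]
    · congr 1
      rw [hi1, hi2, ← hopen, ← inter_union_distrib_left, ← inter_union_distrib_left, eq_comm,
        inter_eq_left]
      intro x _
      rcases lt_trichotomy (orient a b x) 0 with h | h | h
      · exact Or.inl (Or.inr h)
      · exact Or.inr h
      · exact Or.inl (Or.inl h)
    · rw [Set.disjoint_left, hi1, hi2, ← hopen]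
      rintro x (⟨-, h⟩ | ⟨-, h⟩) ⟨-, h'⟩
      · exact h.ne' h'
      · exact h.ne h'
    · rw [Set.disjoint_left, hi1, hi2]
      rintro x ⟨-, h⟩ ⟨-, h'⟩
      exact lt_asymm (show 0 < orient a b x from h) h'
  have hV : volume.real P = volume.real P₁ + volume.real P₂ := by
    have hcl : IsClosed {x | 0 ≤ orient b a x} :=
      isClosed_le continuous_const (continuous_orient b a)
    have hnull : volume (P₁ ∩ P₂) = 0 := by
      -- the chord lies in the frontier of the convex set `P₁`
      refine measure_mono_null (fun x hx => ?_)
        ((hP.inter (convex_nonneg_orient a b)).addHaar_frontier volume)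
      refine ⟨subset_closure hx.1, ?_⟩
      change x ∉ interior P₁
      rw [hi1]
      rintro ⟨-, h⟩
      have h2 : 0 ≤ orient b a x := hx.2.2
      rw [orient_swap] at h2
      exact absurd (show 0 < orient a b x from h) (by linarith)
    rw [measureReal_def, ← hU, measure_union₀ (hPc.isClosed.inter hcl).measurableSet.nullMeasurableSet
      hnull, ENNReal.toReal_add hb1.measure_lt_top.ne hb2.measure_lt_top.ne]
    rfl
  unfold SatisfiesPick at *
  rw [hV, hInt]
  have hL' : (latticeCount P : ℝ) + (latticeCount (openSegment ℝ a b) + 2) =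
    latticeCount P₁ + latticeCount P₂ := by rw [hS] at hL; exact_mod_cast hL
  push_cast
  linarith

/-! ### Induction on the spanning points -/

/-- Discarding a point that is not a vertex does not change the hull (Krein–Milman). -/
lemma convexHull_erase_of_notMem_extremePoints (V : Finset (Fin 2 → ℝ)) {x : Fin 2 → ℝ}
    (hx : x ∉ (convexHull ℝ (V : Set (Fin 2 → ℝ))).extremePoints ℝ) :
    convexHull ℝ ((V.erase x : Finset (Fin 2 → ℝ)) : Set (Fin 2 → ℝ)) =
      convexHull ℝ (V : Set (Fin 2 → ℝ)) := by
  apply Subset.antisymm (convexHull_mono (by simp))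
  rw [← closure_convexHull_extremePoints (V.finite_toSet.isCompact_convexHull ℝ)
    (convex_convexHull ℝ _)]
  refine closure_minimal (convexHull_mono fun y hy => ?_)
    ((V.erase x).finite_toSet.isClosed_convexHull ℝ)
  have hyV := extremePoints_convexHull_subset hy
  simp only [Finset.coe_erase]
  exact ⟨hyV, fun h => hx (h ▸ hy)⟩

/-- Among three points no two of which are collinear with `a`, one is joined to `a` by a line
separating the other two: otherwise the three signs would contradict the antisymmetry of
`orient a` in its last two arguments. -/
lemma exists_separating {a b c d : Fin 2 → ℝ} (hbc : orient a b c ≠ 0) (hbd : orient a b d ≠ 0)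
    (hcd : orient a c d ≠ 0) :
    orient a b c * orient a b d < 0 ∨ orient a c b * orient a c d < 0 ∨
      orient a d b * orient a d c < 0 := by
  have h1 : orient a c b = -orient a b c := by simp only [orient]; ring
  have h2 : orient a d b = -orient a b d := by simp only [orient]; ring
  have h3 : orient a d c = -orient a c d := by simp only [orient]; ring
  rw [h1, h2, h3]
  rcases hbc.lt_or_gt with h | h <;> rcases hbd.lt_or_gt with h' | h' <;>
    rcases hcd.lt_or_gt with h'' | h''
  all_goals first
    | exact Or.inl (by nlinarith)
    | exact Or.inr (Or.inl (by nlinarith))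
    | exact Or.inr (Or.inr (by nlinarith))

/-- A finite set whose convex hull has nonempty interior contains an affine basis of `ℝ²`, so if it
has at most three points it is the vertex set of a triangle. -/
lemma satisfiesPick_of_card_le_three (V : Finset (Fin 2 → ℝ)) (hV : ∀ x ∈ V, x ∈ range latticeMap)
    (hne : (interior (convexHull ℝ (V : Set (Fin 2 → ℝ)))).Nonempty) (hcard : V.card ≤ 3) :
    SatisfiesPick (convexHull ℝ (V : Set (Fin 2 → ℝ))) := by
  have hspan := interior_convexHull_nonempty_iff_affineSpan_eq_top.1 hne
  obtain ⟨t, htV, β, hβ⟩ := AffineBasis.exists_affine_subbasis hspan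
  have hft : Finite t := V.finite_toSet.subset htV
  have := Fintype.ofFinite t
  have hct : Fintype.card t = 3 := by
    have := β.card_eq_finrank_add_one
    simpa using this
  have htV' : t = V := by
    refine Set.eq_of_subset_of_ncard_le htV ?_ V.finite_toSet
    rw [Set.ncard_coe_finset, ← Nat.card_coe_set_eq, Nat.card_eq_fintype_card, hct]
    exact hcard
  have hr : range (β.reindex (Fintype.equivFinOfCardEq hct)) = V := by
    rw [AffineBasis.coe_reindex, (Equiv.surjective _).range_comp, hβ, Subtype.range_coe, htV']
  rw [← hr]
  refine satisfiesPick_triangle _ fun i => hV _ ?_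
  have : (β.reindex (Fintype.equivFinOfCardEq hct)) i ∈ (V : Set (Fin 2 → ℝ)) :=
    hr ▸ mem_range_self i
  exact this

/-- The induction step: a line through two vertices with further vertices strictly on both sides
cuts the polygon into two polygons, each spanned by fewer of the given points. -/
lemma satisfiesPick_of_separating (V : Finset (Fin 2 → ℝ)) (hV : ∀ x ∈ V, x ∈ range latticeMap)
    (hne : (interior (convexHull ℝ (V : Set (Fin 2 → ℝ)))).Nonempty)
    (hext : ∀ x ∈ V, x ∈ (convexHull ℝ (V : Set (Fin 2 → ℝ))).extremePoints ℝ)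
    (ih : ∀ W : Finset (Fin 2 → ℝ), W ⊂ V →
      (interior (convexHull ℝ (W : Set (Fin 2 → ℝ)))).Nonempty →
      SatisfiesPick (convexHull ℝ (W : Set (Fin 2 → ℝ))))
    {a b c d : Fin 2 → ℝ} (ha : a ∈ V) (hb : b ∈ V) (hc : c ∈ V) (hd : d ∈ V) (hab : a ≠ b)
    (hc0 : 0 < orient a b c) (hd0 : orient a b d < 0) :
    SatisfiesPick (convexHull ℝ (V : Set (Fin 2 → ℝ))) := by
  classical
  set P := convexHull ℝ (V : Set (Fin 2 → ℝ)) with hPdef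
  have hP : Convex ℝ P := convex_convexHull ℝ _
  have hPc : IsCompact P := V.finite_toSet.isCompact_convexHull ℝ
  have hmeet : ∀ U : Set (Fin 2 → ℝ), IsOpen U → ∀ x ∈ V, x ∈ U → (interior P ∩ U).Nonempty := by
    intro U hU x hx hxU
    have h1 : x ∈ closure (interior P) := by
      rw [hP.closure_interior_eq_closure_of_nonempty_interior hne]
      exact subset_closure (subset_convexHull ℝ _ hx)
    rw [inter_comm]
    exact mem_closure_iff.1 h1 U hU hxU
  obtain ⟨c', hc', hc0'⟩ := hmeet {x | 0 < orient a b x}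
    (isOpen_lt continuous_const (continuous_orient a b)) c hc hc0
  obtain ⟨d', hd', hd0'⟩ := hmeet {x | orient a b x < 0}
    (isOpen_lt (continuous_orient a b) continuous_const) d hd hd0
  have hhalf : ∀ {a b d d' : Fin 2 → ℝ}, a ∈ V → b ∈ V → d ∈ V → d' ∈ interior P → a ≠ b →
      orient a b d < 0 → 0 < orient a b d' → SatisfiesPick (P ∩ {x | 0 ≤ orient a b x}) := by
    intro a b d d' ha hb hd hd' hab hd0 hd0'
    have hint : (interior (P ∩ {x | 0 ≤ orient a b x})).Nonempty := by
      rw [interior_inter, interior_nonneg_orient hab]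
      exact ⟨d', hd', hd0'⟩
    have heq := convexHull_inter_halfPlane ha hb (hext a ha) (hext b hb) hab
    rw [← hPdef] at heq
    have hcoe : ({x ∈ V | 0 ≤ orient a b x} : Set (Fin 2 → ℝ)) =
        ((V.filter fun x => 0 ≤ orient a b x : Finset (Fin 2 → ℝ)) : Set (Fin 2 → ℝ)) := by
      ext x; simp
    rw [hcoe] at heq
    rw [heq] at hint ⊢
    refine ih _ ?_ hint
    refine Finset.filter_ssubset.2 ⟨d, hd, not_le.2 hd0⟩
  refine satisfiesPick_of_chord hP hPc hab (hV a ha) (hV b hb)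
    (inter_line_eq_segment hP (hext a ha) (hext b hb) hab)
    (interior_inter_line_eq_openSegment hP (hext a ha) (hext b hb) hab hc' hd' hc0' hd0')
    (hhalf ha hb hd hc' hab hd0 hc0') (hhalf hb ha hc hd' hab.symm ?_ ?_)
  · rw [orient_swap]; linarith
  · have : orient a b d' < 0 := hd0'
    rw [orient_swap]; linarith

/-- Pick's formula for all convex lattice polygons, by induction on the set of spanning points. -/
lemma satisfiesPick_convexHull (V : Finset (Fin 2 → ℝ)) (hV : ∀ x ∈ V, x ∈ range latticeMap)
    (hne : (interior (convexHull ℝ (V : Set (Fin 2 → ℝ)))).Nonempty) :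
    SatisfiesPick (convexHull ℝ (V : Set (Fin 2 → ℝ))) := by
  classical
  induction V using Finset.strongInduction with
  | H V ih =>
  by_cases hext : ∀ x ∈ V, x ∈ (convexHull ℝ (V : Set (Fin 2 → ℝ))).extremePoints ℝ
  swap
  · push Not at hext
    obtain ⟨x, hxV, hx⟩ := hext
    have h := convexHull_erase_of_notMem_extremePoints V hx
    rw [← h] at hne ⊢
    exact ih _ (Finset.erase_ssubset hxV) (fun y hy => hV y (Finset.mem_of_mem_erase hy)) hne
  by_cases hcard : V.card ≤ 3
  · exact satisfiesPick_of_card_le_three V hV hne hcard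
  have hcut : ∀ {a b c d : Fin 2 → ℝ}, a ∈ V → b ∈ V → c ∈ V → d ∈ V → a ≠ b →
      orient a b c * orient a b d < 0 → SatisfiesPick (convexHull ℝ (V : Set (Fin 2 → ℝ))) := by
    intro a b c d ha hb hc hd hab h
    have ih' : ∀ W : Finset (Fin 2 → ℝ), W ⊂ V →
      (interior (convexHull ℝ (W : Set (Fin 2 → ℝ)))).Nonempty →
      SatisfiesPick (convexHull ℝ (W : Set (Fin 2 → ℝ))) := fun W hW =>
        ih W hW fun x hx => hV x (hW.1 hx)
    rcases mul_neg_iff.1 h with ⟨h1, h2⟩ | ⟨h1, h2⟩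
    · exact satisfiesPick_of_separating V hV hne hext ih' ha hb hc hd hab h1 h2
    · exact satisfiesPick_of_separating V hV hne hext ih' ha hb hd hc hab h2 h1
  have hcol : ∀ {a b c : Fin 2 → ℝ}, a ∈ V → b ∈ V → c ∈ V → a ≠ b → a ≠ c → b ≠ c →
      orient a b c ≠ 0 := by
    intro a b c ha hb hc hab hac hbc h
    have hseg : c ∈ segment ℝ a b := by
      rw [← inter_line_eq_segment (convex_convexHull ℝ _) (hext a ha) (hext b hb) hab]
      exact ⟨subset_convexHull ℝ _ hc, h⟩
    rcases (mem_extremePoints_iff_forall_segment.1 (hext c hc)).2 a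
      (subset_convexHull ℝ _ ha) b (subset_convexHull ℝ _ hb) hseg with h | h
    · exact hac h
    · exact hbc h
  obtain ⟨W, hWV, hW⟩ := Finset.exists_subset_card_eq (n := 4) (s := V) (by omega)
  obtain ⟨a, b, c, d, hab, hac, had, hbc, hbd, hcd, rfl⟩ := Finset.card_eq_four.1 hW
  have ha : a ∈ V := hWV (by simp)
  have hb : b ∈ V := hWV (by simp)
  have hc : c ∈ V := hWV (by simp)
  have hd : d ∈ V := hWV (by simp)
  rcases exists_separating (hcol ha hb hc hab hac hbc) (hcol ha hb hd hab had hbd)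
    (hcol ha hc hd hac had hcd) with h | h | h
  · exact hcut ha hb hc hd hab h
  · exact hcut ha hc hb hd hac h
  · exact hcut ha hd hb hc had h

/-- For a convex lattice polygon `P = convexHull ℝ S` with nonempty interior:
`I + (B − v)/2 + v/4 = A + (4 − v)/4`, where `A` is the area of `P`, `I` the number of
interior lattice points, `B` the number of boundary lattice points, and `v` the number of
extreme points (vertices) of `P`. -/
theorem pick_formula_y_one (S : Finset (Fin 2 → ℤ)) (P : Set (Fin 2 → ℝ))
    (hP : P = convexHull ℝ (latticeMap '' (S : Set (Fin 2 → ℤ))))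
    (hne : (interior P).Nonempty)
    (A : ℝ) (hA : A = (volume P).toReal)
    (I B v : ℕ)
    (hI : I = {n : Fin 2 → ℤ | latticeMap n ∈ interior P}.ncard)
    (hB : B = {n : Fin 2 → ℤ | latticeMap n ∈ frontier P}.ncard)
    (hv : v = (Set.extremePoints ℝ P).ncard) :
    (I : ℝ) + ((B : ℝ) - (v : ℝ)) / 2 + (v : ℝ) / 4 = A + (4 - (v : ℝ)) / 4 := by

  classical
  have hS : P = convexHull ℝ ((S.image latticeMap : Finset (Fin 2 → ℝ)) : Set (Fin 2 → ℝ)) := by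
    rw [hP, Finset.coe_image]
  have hpick : SatisfiesPick P := by
    rw [hS] at hne ⊢
    refine satisfiesPick_convexHull _ (fun x hx => ?_) hne
    obtain ⟨n, -, rfl⟩ := Finset.mem_image.1 hx
    exact ⟨n, rfl⟩
  have hPc : IsCompact P := by
    rw [hS]; exact (Finset.finite_toSet _).isCompact_convexHull ℝ
  have hcount : latticeCount P = latticeCount (interior P) + latticeCount (frontier P) := by
    rw [← latticeCount_union (hPc.isBounded.subset interior_subset)
      (hPc.isBounded.subset hPc.isClosed.frontier_subset) disjoint_interior_frontier,
      ← closure_eq_interior_union_frontier, hPc.isClosed.closure_eq]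
  have hI' : I = latticeCount (interior P) := hI
  have hB' : B = latticeCount (frontier P) := hB
  rw [SatisfiesPick, hcount, ← hI', ← hB', measureReal_def, ← hA] at hpick
  push_cast at hpick
  linarith
end

section
/- Let S ⊆ ℤ² be a finite set of lattice points and let P = convexHull ℝ S ⊆ ℝ² have nonempty interior (a convex lattice polygon). Then (I + B) − (B + v)/2 + v/4 = A + (4 − v)/4, where A is the Lebesgue measure of P, I is the number of points of ℤ² in the interior of P, B is the number of points of ℤ² in the frontier of P, and v is the number of extreme points of P. -/
/-!
The number of extreme points cancels from both sides, so the claim is Pick's formula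
`I + B / 2 = A + 1` for the polygon `P`. It is proved by slicing `P` into vertical segments.

Write `P = {(x, y) | a ≤ x ≤ b, f x ≤ y ≤ g x}` with `a`, `b` integers
(`exists_isColumnwise`), and let `midRound y = (⌊y⌋ + ⌈y⌉) / 2`. In an integer column
`a < x < b` there are `⌊g x⌋ - ⌈f x⌉ + 1` lattice points of `P` and `⌈g x⌉ - ⌊f x⌋ - 1` lattice
points of its interior, altogether `2 * (midRound (g x) - midRound (f x))`; the two end columns
have integral end points and miss the interior. Hence `2 * I + B - 2` is twice the trapezoidal sum
(`trapSum`) of `midRound ∘ g - midRound ∘ f` over the integers of `[a, b]`, while `A` is the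
integral of `g - f`.

It remains to see that the trapezoidal sum of `midRound ∘ g` equals the integral of `g`
(`IsUpperEnvelope.trapSum_eq`), and likewise for `-f`. Between consecutive lattice points on its
graph, `g` is affine: a lattice point of `S` maximizing the height above the chord, were that
height positive, would itself lie on the graph strictly between them. On an affine piece with
lattice end points, the point reflection in its midpoint preserves the lattice and
`midRound (n - y) = n - midRound y` for integral `n`, so that the terms of the trapezoidal sum pair
up to the area of a trapezoid.
-/

open MeasureTheory Set

/-! ### Trapezoidal sums -/

/-- The mean of floor and ceiling: the identity on integers, `⌊y⌋ + 1 / 2` elsewhere. -/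
noncomputable def midRound (y : ℝ) : ℝ := ((⌊y⌋ : ℝ) + ⌈y⌉) / 2

lemma midRound_intCast (n : ℤ) : midRound n = n := by simp [midRound]

lemma midRound_neg (y : ℝ) : midRound (-y) = -midRound y := by
  simp only [midRound, Int.floor_neg, Int.ceil_neg]; push_cast; ring

lemma midRound_intCast_sub (n : ℤ) (y : ℝ) : midRound (n - y) = n - midRound y := by
  have h1 : ⌊(n : ℝ) - y⌋ = n - ⌈y⌉ := by
    rw [sub_eq_add_neg, Int.floor_intCast_add, Int.floor_neg]; ring
  have h2 : ⌈(n : ℝ) - y⌉ = n - ⌊y⌋ := by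
    rw [sub_eq_add_neg, add_comm, Int.ceil_add_intCast, Int.ceil_neg]; ring
  simp only [midRound, h1, h2]; push_cast; ring

/-- On `[a, b]`, the function `g` is the upper boundary of the convex hull of the finite set `T` of
lattice points, all of which have abscissa in `[a, b]`. The convex hull enters only through concavity
of `g` and the fact that a line lying above `T` lies above `g`. -/
structure IsUpperEnvelope (T : Finset (ℤ × ℤ)) (a b : ℤ) (g : ℝ → ℝ) : Prop where
  concave : ConcaveOn ℝ (Icc (a : ℝ) b) g
  mem_Icc : ∀ t ∈ T, t.1 ∈ Icc a b
  le : ∀ t ∈ T, (t.2 : ℝ) ≤ g t.1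
  le_line : ∀ m c : ℝ, (∀ t ∈ T, (t.2 : ℝ) ≤ m * t.1 + c) → ∀ x ∈ Icc (a : ℝ) b, g x ≤ m * x + c

/-- The trapezoidal sum of `midRound ∘ g` with unit steps from `x` to `x + n`. -/
noncomputable def trapSum (g : ℝ → ℝ) (x : ℤ) (n : ℕ) : ℝ :=
  ∑ k ∈ Finset.range n, (midRound (g (x + k)) + midRound (g (x + k + 1))) / 2

lemma trapSum_add (g : ℝ → ℝ) (x : ℤ) (m n : ℕ) :
    trapSum g x (m + n) = trapSum g x m + trapSum g (x + m) n := by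
  simp only [trapSum, Finset.sum_range_add]
  push_cast
  simp only [add_assoc]

/-- If the graph of `g` is symmetric about the centre of the interval, with integral sum of opposite
values, then so is that of `midRound ∘ g`, and the trapezoidal sum is the length of the interval
times the common mean. -/
lemma trapSum_line (g : ℝ → ℝ) (x : ℤ) (n : ℕ) (s : ℤ)
    (hg : ∀ k : ℕ, k ≤ n → g (x + k) + g (x + (n - k : ℕ)) = s) :
    trapSum g x n = n * s / 2 := by
  have key : ∀ k : ℕ, k ≤ n →
      midRound (g (x + k)) + midRound (g (x + (n - k : ℕ))) = s := by
    intro k hk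
    have h := hg k hk
    rw [show g (x + (n - k : ℕ)) = s - g (x + k) by linarith, midRound_intCast_sub]
    ring
  have h2 : trapSum g x n + trapSum g x n = n * s := by
    conv_lhs => arg 2; rw [trapSum, ← Finset.sum_range_reflect]
    rw [trapSum, ← Finset.sum_add_distrib]
    rw [Finset.sum_congr rfl (g := fun _ => (s : ℝ)), Finset.sum_const, Finset.card_range,
      nsmul_eq_mul]
    intro k hk
    have hk := Finset.mem_range.1 hk
    have e1 := key k (by omega)
    have e2 := key (k + 1) (by omega)
    have c1 : ((n - k : ℕ) : ℝ) = ((n - 1 - k : ℕ) : ℝ) + 1 := by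
      rw [← Nat.cast_succ]; congr 1; omega
    have c2 : n - (k + 1) = n - 1 - k := by omega
    rw [c1] at e1
    rw [c2] at e2
    push_cast at e2
    rw [← add_assoc] at e1 e2
    linarith
  linarith

/-- Between lattice points on the graph of an upper envelope, rounding by `midRound` and replacing
the integral by the trapezoidal sum makes no error. The proof splits at intermediate lattice points
of the graph; when there are none, `g` is affine. -/
lemma IsUpperEnvelope.trapSum_eq {T : Finset (ℤ × ℤ)} {a b : ℤ} {g : ℝ → ℝ}
    (hg : IsUpperEnvelope T a b g) (n : ℕ) : ∀ x : ℤ, a ≤ x → x + n ≤ b →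
    (∃ y : ℤ, g x = y) → (∃ y : ℤ, g (x + n) = y) →
    IntervalIntegrable g volume x (x + n) ∧ trapSum g x n = ∫ t in (x : ℝ)..(x + n), g t := by
  induction n using Nat.strong_induction_on with
  | _ n ih =>
  intro x hax hxb hy1 hy2
  rcases Nat.eq_zero_or_pos n with rfl | hn
  · simp [trapSum]
  by_cases hsplit : ∃ k : ℕ, 0 < k ∧ k < n ∧ ∃ y : ℤ, g (x + k) = y
  · obtain ⟨k, hk0, hkn, hk⟩ := hsplit
    obtain ⟨l, rfl⟩ := Nat.exists_eq_add_of_lt hkn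
    obtain ⟨i1, e1⟩ := ih k hkn x hax (by push_cast at hxb; omega) hy1 hk
    obtain ⟨i2, e2⟩ := ih (l + 1) (by omega) (x + k) (by omega) (by push_cast at hxb ⊢; omega)
      (by exact_mod_cast hk) (by
        obtain ⟨y, hy⟩ := hy2; refine ⟨y, ?_⟩; rw [← hy]; congr 1; push_cast; ring)
    have c : (((x + k : ℤ) : ℝ) + ((l + 1 : ℕ) : ℝ)) = x + ((k + l + 1 : ℕ) : ℝ) := by
      push_cast; ring
    rw [c] at i2 e2
    have c' : ((x + k : ℤ) : ℝ) = x + (k : ℝ) := by push_cast; ring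
    rw [c'] at i2 e2
    refine ⟨i1.trans i2, ?_⟩
    rw [← intervalIntegral.integral_add_adjacent_intervals i1 i2, ← e1, ← e2, add_assoc k l 1,
      trapSum_add]
  obtain ⟨y1, hy1⟩ := hy1
  obtain ⟨y2, hy2⟩ := hy2
  have hn' : (0 : ℝ) < n := by exact_mod_cast hn
  have haxR : (a : ℝ) ≤ x := by exact_mod_cast hax
  have hxbR : (x : ℝ) + n ≤ b := by exact_mod_cast hxb
  obtain ⟨m, hm⟩ : ∃ m : ℝ, m = (g (x + n) - g x) / n := ⟨_, rfl⟩
  have hmn : m * n = g (x + n) - g x := by rw [hm]; field_simp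
  -- outside of `[x, x + n]`, a concave function stays below the line of the chord
  have hout : ∀ t ∈ Icc (a : ℝ) b, t ≤ x ∨ x + n ≤ t → g t ≤ m * t + (g x - m * x) := by
    intro t ht htx
    rcases htx with h | h
    · rcases h.eq_or_lt with rfl | h
      · linarith
      have := hg.concave.slope_anti_adjacent ht (z := x + n) ⟨by linarith, hxbR⟩ h (by linarith)
      rw [add_sub_cancel_left, ← hm, le_div_iff₀ (by linarith)] at this
      linarith
    · rcases h.eq_or_lt with rfl | h
      · linarith
      have := hg.concave.slope_anti_adjacent (x := x) ⟨haxR, by linarith⟩ ht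
        (y := x + n) (by linarith) h
      rw [add_sub_cancel_left, ← hm, div_le_iff₀ (by linarith)] at this
      linarith
  -- a point of `T` highest above the chord would be an intermediate lattice point on the graph
  have hle : ∀ t ∈ T, (t.2 : ℝ) ≤ m * t.1 + (g x - m * x) := by
    by_contra! hcon
    obtain ⟨t₀, ht₀, hlt₀⟩ := hcon
    obtain ⟨t, ht, hmax⟩ := T.exists_max_image (fun t => (t.2 : ℝ) - m * t.1) ⟨t₀, ht₀⟩
    have hlt : m * t.1 + (g x - m * x) < t.2 := by linarith [hmax t₀ ht₀]
    have htI : (t.1 : ℝ) ∈ Icc (a : ℝ) b := by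
      have := hg.mem_Icc t ht
      exact ⟨by exact_mod_cast this.1, by exact_mod_cast this.2⟩
    have hgt : g t.1 = t.2 := by
      refine le_antisymm ?_ (hg.le t ht)
      have := hg.le_line m (t.2 - m * t.1) (fun s hs => by linarith [hmax s hs]) t.1 htI
      linarith
    have h1 : (x : ℝ) < t.1 := by
      by_contra! h; linarith [hout _ htI (Or.inl h)]
    have h2 : (t.1 : ℝ) < x + n := by
      by_contra! h; linarith [hout _ htI (Or.inr h)]
    have h1' : x < t.1 := by exact_mod_cast h1
    have h2' : t.1 < x + n := by exact_mod_cast h2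
    refine hsplit ⟨(t.1 - x).toNat, by omega, by omega, t.2, ?_⟩
    rw [← hgt]
    congr 1
    have : (((t.1 - x).toNat : ℤ) : ℝ) = ((t.1 - x : ℤ) : ℝ) := by
      rw [Int.toNat_of_nonneg (by omega)]
    push_cast at this
    linarith
  have hlin : ∀ t ∈ Icc (x : ℝ) (x + n), g t = m * t + (g x - m * x) := by
    intro t ht
    refine le_antisymm (hg.le_line _ _ hle t ⟨haxR.trans ht.1, ht.2.trans hxbR⟩) ?_
    have := hg.concave.2 (show (x : ℝ) ∈ Icc (a : ℝ) b from ⟨haxR, by linarith⟩)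
      (show (x : ℝ) + n ∈ Icc (a : ℝ) b from ⟨by linarith, hxbR⟩)
      (show 0 ≤ 1 - (t - x) / n by rw [sub_nonneg, div_le_one hn']; linarith [ht.2])
      (show 0 ≤ (t - x) / n from div_nonneg (by linarith [ht.1]) hn'.le) (by ring)
    have e : (1 - (t - x) / n) * x + (t - x) / n * (x + n) = t := by field_simp; ring
    simp only [smul_eq_mul] at this
    rw [e] at this
    refine le_trans (le_of_eq ?_) this
    rw [hm]; field_simp; ring
  have hcongr : EqOn (fun t => m * t + (g x - m * x)) g (uIcc (x : ℝ) (x + n)) := by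
    intro t ht
    rw [uIcc_of_le (by linarith)] at ht
    exact (hlin t ht).symm
  refine ⟨IntervalIntegrable.congr (fun t ht => hcongr (uIoc_subset_uIcc ht))
    (by apply Continuous.intervalIntegrable; fun_prop), ?_⟩
  rw [trapSum_line g x n (y1 + y2), ← intervalIntegral.integral_congr hcongr,
    intervalIntegral.integral_add (by apply Continuous.intervalIntegrable; fun_prop) (by simp),
    intervalIntegral.integral_const_mul, integral_id, intervalIntegral.integral_const]
  · push_cast
    rw [← hy1, ← hy2]
    simp only [smul_eq_mul]
    linear_combination -(n : ℝ) / 2 * hmn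
  · intro k hk
    have hk' : (k : ℝ) ≤ n := by exact_mod_cast hk
    have : ((n - k : ℕ) : ℝ) = n - k := by push_cast [hk]; ring
    have hk0 : (0 : ℝ) ≤ k := k.cast_nonneg
    rw [this, hlin (x + k) ⟨by linarith, by linarith⟩,
      hlin (x + (n - k)) ⟨by linarith, by linarith⟩]
    push_cast
    rw [← hy1, ← hy2]
    linear_combination hmn

/-- The envelope is integral at an end `e` of the range of abscissae of `T`, where `σ = 1` at the left
end and `σ = -1` at the right end: a line through the highest point of `T` over `e` lies above all
of `T` once it is steep enough. -/
lemma IsUpperEnvelope.exists_int {T : Finset (ℤ × ℤ)} {a b : ℤ} {g : ℝ → ℝ}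
    (hg : IsUpperEnvelope T a b g) (e σ : ℤ) (he : e ∈ Icc a b) (hT : ∃ t ∈ T, t.1 = e)
    (hσ : ∀ t ∈ T, t.1 ≠ e → 1 ≤ σ * (t.1 - e)) : ∃ y : ℤ, g e = y := by
  obtain ⟨t₀, ht₀, h0⟩ := hT
  obtain ⟨t, ht, hmax⟩ := (T.filter (fun t => t.1 = e)).exists_max_image (fun t => t.2)
    ⟨t₀, by simp [ht₀, h0]⟩
  simp only [Finset.mem_filter] at ht hmax
  refine ⟨t.2, le_antisymm ?_ (by rw [← ht.2]; exact hg.le t ht.1)⟩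
  obtain ⟨M, hM⟩ := (T.image (fun s => s.2 - t.2)).exists_le
  have hM : ∀ s ∈ T, s.2 - t.2 ≤ M := fun s hs => hM _ (Finset.mem_image_of_mem _ hs)
  have hM0 : 0 ≤ M := by simpa using hM t ht.1
  have := hg.le_line (M * σ) (t.2 - M * σ * e) (fun s hs => ?_) e
    ⟨by exact_mod_cast he.1, by exact_mod_cast he.2⟩
  · linarith
  · have : s.2 ≤ M * σ * s.1 + (t.2 - M * σ * e) := by
      by_cases hse : s.1 = e
      · rw [hse]; linarith [hmax s ⟨hs, hse⟩]
      · nlinarith [hσ s hs hse, hM s hs]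
    exact_mod_cast this

lemma trapSum_eq_sum_Ioo (g : ℝ → ℝ) (a : ℤ) (n : ℕ) :
    trapSum g a (n + 1) = ∑ x ∈ Finset.Ioo a (a + n + 1), midRound (g x) +
      (midRound (g a) + midRound (g ((a + n + 1 : ℤ)))) / 2 := by
  induction n with
  | zero =>
    have : Finset.Ioo a (a + 1) = ∅ := by ext x; simp
    simp [trapSum, this]
  | succ n ih =>
    have : Finset.Ioo a (a + (n + 1 : ℕ) + 1) = insert (a + n + 1) (Finset.Ioo a (a + n + 1)) := by
      ext x; simp; omega
    rw [trapSum, Finset.sum_range_succ, ← trapSum, ih, this, Finset.sum_insert (by simp)]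
    push_cast
    simp only [← add_assoc]
    ring

/-! ### The polygon as a union of columns -/

/-- Lattice points between two integer-valued functions, counted column by column. -/
lemma ncard_columns (X : Finset ℤ) (l u : ℤ → ℤ) (h : ∀ x ∈ X, l x ≤ u x + 1) :
    {n : Fin 2 → ℤ | n 0 ∈ X ∧ l (n 0) ≤ n 1 ∧ n 1 ≤ u (n 0)}.Finite ∧
    ({n : Fin 2 → ℤ | n 0 ∈ X ∧ l (n 0) ≤ n 1 ∧ n 1 ≤ u (n 0)}.ncard : ℝ)
      = ∑ x ∈ X, ((u x : ℝ) + 1 - l x) := by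
  have hset : {n : Fin 2 → ℤ | n 0 ∈ X ∧ l (n 0) ≤ n 1 ∧ n 1 ≤ u (n 0)} =
      (fun p : (_ : ℤ) × ℤ => (![p.1, p.2] : Fin 2 → ℤ)) ''
        (X.sigma (fun x => Finset.Icc (l x) (u x)) : Finset ((_ : ℤ) × ℤ)) := by
    ext n
    simp only [mem_ofPred_eq, mem_image, Finset.mem_coe, Finset.mem_sigma, Finset.mem_Icc]
    constructor
    · intro hn
      exact ⟨⟨n 0, n 1⟩, hn, by ext i; fin_cases i <;> rfl⟩
    · rintro ⟨p, hp, rfl⟩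
      exact hp
  have hinj : Function.Injective (fun p : (_ : ℤ) × ℤ => (![p.1, p.2] : Fin 2 → ℤ)) := by
    rintro ⟨x, y⟩ ⟨x', y'⟩ hxy
    have h0 : x = x' := congrFun hxy 0
    have h1 : y = y' := congrFun hxy 1
    rw [h0, h1]
  rw [hset]
  refine ⟨(Finset.finite_toSet _).image _, ?_⟩
  rw [ncard_image_of_injective _ hinj, ncard_coe_finset, Finset.card_sigma, Nat.cast_sum]
  refine Finset.sum_congr rfl fun x hx => ?_
  have := h x hx
  rw [Int.card_Icc, ← Int.cast_natCast, Int.toNat_of_nonneg (by omega)]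
  push_cast; rfl

/-- `P` is the convex hull of the lattice points `S`, and is the region between the graphs of `f` and
`g` over the interval `[a, b]`, whose integral ends are abscissae of points of `S`. Outside `[a, b]`
the values of `f` and `g` are arbitrary. -/
structure IsColumnwise (S : Finset (Fin 2 → ℤ)) (P : Set (Fin 2 → ℝ)) (a b : ℤ)
    (f g : ℝ → ℝ) : Prop where
  hull : P = convexHull ℝ (latticeMap '' (S : Set (Fin 2 → ℤ)))
  mem_iff : ∀ x y : ℝ, ![x, y] ∈ P ↔ x ∈ Icc (a : ℝ) b ∧ f x ≤ y ∧ y ≤ g x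
  le : ∀ x ∈ Icc (a : ℝ) b, f x ≤ g x
  left : ∃ n ∈ S, n 0 = a
  right : ∃ n ∈ S, n 0 = b

lemma halfPlane_of_lattice {S : Finset (Fin 2 → ℤ)} {α β c : ℝ}
    (h : ∀ n ∈ S, α * n 0 + β * n 1 ≤ c) :
    ∀ x y : ℝ, ![x, y] ∈ convexHull ℝ (latticeMap '' (S : Set (Fin 2 → ℤ))) →
      α * x + β * y ≤ c := by
  have hconv : Convex ℝ {p : Fin 2 → ℝ | α * p 0 + β * p 1 ≤ c} := by
    have : IsLinearMap ℝ (fun p : Fin 2 → ℝ => α * p 0 + β * p 1) :=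
      ⟨fun p q => by simp; ring, fun r p => by simp; ring⟩
    exact convex_halfSpace_le this c
  intro x y hxy
  have : latticeMap '' (S : Set (Fin 2 → ℤ)) ⊆ {p : Fin 2 → ℝ | α * p 0 + β * p 1 ≤ c} := by
    rintro _ ⟨n, hn, rfl⟩
    exact h n hn
  simpa using convexHull_min this hconv hxy

lemma combo_vec (s t x y x' y' : ℝ) :
    s • (![x, y] : Fin 2 → ℝ) + t • ![x', y'] = ![s * x + t * x', s * y + t * y'] := by
  ext i; fin_cases i <;> simp

lemma exists_isColumnwise {S : Finset (Fin 2 → ℤ)} (hS : S.Nonempty) :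
    ∃ (a b : ℤ) (f g : ℝ → ℝ),
      IsColumnwise S (convexHull ℝ (latticeMap '' (S : Set (Fin 2 → ℤ)))) a b f g := by
  obtain ⟨na, hna, hmin⟩ := S.exists_min_image (fun n => n 0) hS
  obtain ⟨nb, hnb, hmax⟩ := S.exists_max_image (fun n => n 0) hS
  set P := convexHull ℝ (latticeMap '' (S : Set (Fin 2 → ℤ))) with hP
  have hconv : Convex ℝ P := convex_convexHull ℝ _
  have hcomp : IsCompact P := (S.finite_toSet.image _).isCompact_convexHull ℝ
  have hsub : ∀ n ∈ S, ![(n 0 : ℝ), (n 1 : ℝ)] ∈ P := by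
    intro n hn
    have : latticeMap n ∈ P := subset_convexHull ℝ _ ⟨n, hn, rfl⟩
    convert this using 1
    ext i; fin_cases i <;> rfl
  have hrange : ∀ x y : ℝ, ![x, y] ∈ P → x ∈ Icc (na 0 : ℝ) (nb 0) := by
    intro x y h
    constructor
    · have := halfPlane_of_lattice (α := -1) (β := 0) (c := -(na 0 : ℝ)) (fun n hn => by
        have : (na 0 : ℝ) ≤ n 0 := by exact_mod_cast hmin n hn
        linarith) x y h
      linarith
    · have := halfPlane_of_lattice (α := 1) (β := 0) (c := (nb 0 : ℝ)) (fun n hn => by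
        have : (n 0 : ℝ) ≤ nb 0 := by exact_mod_cast hmax n hn
        linarith) x y h
      linarith
  have hslice : ∀ x ∈ Icc (na 0 : ℝ) (nb 0), ∃ y, ![x, y] ∈ P := by
    intro x hx
    rw [← segment_eq_Icc (by linarith [hx.1, hx.2])] at hx
    obtain ⟨s, t, hs, ht, hst, rfl⟩ := hx
    have := hconv (hsub na hna) (hsub nb hnb) hs ht hst
    rw [combo_vec] at this
    exact ⟨_, this⟩
  have hcol : ∀ x : ℝ, ∃ l u : ℝ, x ∈ Icc (na 0 : ℝ) (nb 0) →
      l ≤ u ∧ {y : ℝ | ![x, y] ∈ P} = Icc l u := by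
    intro x
    by_cases hx : x ∈ Icc (na 0 : ℝ) (nb 0)
    swap
    · exact ⟨0, 0, fun h => absurd h hx⟩
    have hne : {y : ℝ | ![x, y] ∈ P}.Nonempty := hslice x hx
    have hcv : Convex ℝ {y : ℝ | ![x, y] ∈ P} := by
      intro y hy z hz s t hs ht hst
      have := hconv hy hz hs ht hst
      rw [combo_vec, ← add_mul, hst, one_mul] at this
      exact this
    have hcl : IsClosed {y : ℝ | ![x, y] ∈ P} :=
      hcomp.isClosed.preimage (by fun_prop)
    have hck : IsCompact {y : ℝ | ![x, y] ∈ P} := by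
      refine (hcomp.image (continuous_apply (1 : Fin 2))).of_isClosed_subset hcl ?_
      intro y hy
      exact ⟨_, hy, rfl⟩
    have := eq_Icc_of_connected_compact ⟨hne, hcv.isPreconnected⟩ hck
    refine ⟨_, _, fun _ => ⟨?_, this⟩⟩
    rw [this] at hne
    exact nonempty_Icc.1 hne
  choose f g hfg using hcol
  refine ⟨na 0, nb 0, f, g, rfl, fun x y => ?_, fun x hx => (hfg x hx).1, ⟨na, hna, rfl⟩,
    ⟨nb, hnb, rfl⟩⟩
  constructor
  · intro h
    have hx := hrange x y h
    have : y ∈ {y : ℝ | ![x, y] ∈ P} := h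
    rw [(hfg x hx).2] at this
    exact ⟨hx, this⟩
  · rintro ⟨hx, h⟩
    have : y ∈ {y : ℝ | ![x, y] ∈ P} := by rw [(hfg x hx).2]; exact h
    exact this

namespace IsColumnwise

variable {S : Finset (Fin 2 → ℤ)} {P : Set (Fin 2 → ℝ)} {a b : ℤ} {f g : ℝ → ℝ}

lemma convex (h : IsColumnwise S P a b f g) : Convex ℝ P := by
  rw [h.hull]; exact convex_convexHull ℝ _

lemma isClosed (h : IsColumnwise S P a b f g) : IsClosed P := by
  rw [h.hull]; exact ((S.finite_toSet.image _).isCompact_convexHull ℝ).isClosed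

lemma lattice_mem (h : IsColumnwise S P a b f g) {n : Fin 2 → ℤ} (hn : n ∈ S) :
    (n 0 : ℝ) ∈ Icc (a : ℝ) b ∧ f (n 0) ≤ n 1 ∧ n 1 ≤ g (n 0) := by
  rw [← h.mem_iff, h.hull]
  have : latticeMap n ∈ convexHull ℝ (latticeMap '' (S : Set (Fin 2 → ℤ))) :=
    subset_convexHull ℝ _ ⟨n, hn, rfl⟩
  convert this using 1
  ext i; fin_cases i <;> rfl

lemma upper (h : IsColumnwise S P a b f g) :
    IsUpperEnvelope (S.image fun n => (n 0, n 1)) a b g where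
  concave := by
    refine ⟨convex_Icc _ _, fun x hx y hy s t hs ht hst => ?_⟩
    have := h.convex ((h.mem_iff _ _).2 ⟨hx, h.le x hx, le_rfl⟩)
      ((h.mem_iff _ _).2 ⟨hy, h.le y hy, le_rfl⟩) hs ht hst
    rw [combo_vec, h.mem_iff] at this
    exact this.2.2
  mem_Icc := by
    intro t ht
    obtain ⟨n, hn, rfl⟩ := Finset.mem_image.1 ht
    have := (h.lattice_mem hn).1
    exact ⟨by exact_mod_cast this.1, by exact_mod_cast this.2⟩
  le := by
    intro t ht
    obtain ⟨n, hn, rfl⟩ := Finset.mem_image.1 ht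
    exact (h.lattice_mem hn).2.2
  le_line := by
    intro m c hm x hx
    have hp := (h.mem_iff x (g x)).2 ⟨hx, h.le x hx, le_rfl⟩
    rw [h.hull] at hp
    have := halfPlane_of_lattice (α := -m) (β := 1) (c := c) (fun n hn => by
      have := hm _ (Finset.mem_image_of_mem _ hn)
      simp only at this
      linarith) x (g x) hp
    linarith

/-- The lower boundary, reflected in the horizontal axis, is an upper envelope. -/
lemma lower (h : IsColumnwise S P a b f g) :
    IsUpperEnvelope (S.image fun n => (n 0, -n 1)) a b (fun x => -f x) where
  concave := by
    refine ⟨convex_Icc _ _, fun x hx y hy s t hs ht hst => ?_⟩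
    have := h.convex ((h.mem_iff _ _).2 ⟨hx, le_rfl, h.le x hx⟩)
      ((h.mem_iff _ _).2 ⟨hy, le_rfl, h.le y hy⟩) hs ht hst
    rw [combo_vec, h.mem_iff] at this
    have := this.2.1
    simp only [smul_eq_mul]
    linarith
  mem_Icc := by
    intro t ht
    obtain ⟨n, hn, rfl⟩ := Finset.mem_image.1 ht
    have := (h.lattice_mem hn).1
    exact ⟨by exact_mod_cast this.1, by exact_mod_cast this.2⟩
  le := by
    intro t ht
    obtain ⟨n, hn, rfl⟩ := Finset.mem_image.1 ht
    have := (h.lattice_mem hn).2.1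
    push_cast
    linarith
  le_line := by
    intro m c hm x hx
    have hp := (h.mem_iff x (f x)).2 ⟨hx, le_rfl, h.le x hx⟩
    rw [h.hull] at hp
    have := halfPlane_of_lattice (α := -m) (β := -1) (c := c) (fun n hn => by
      have := hm _ (Finset.mem_image_of_mem _ hn)
      push_cast at this
      linarith) x (f x) hp
    linarith

lemma lattice_range (h : IsColumnwise S P a b f g) {n : Fin 2 → ℤ} (hn : n ∈ S) :
    a ≤ n 0 ∧ n 0 ≤ b := by
  have := (h.lattice_mem hn).1
  exact ⟨by exact_mod_cast this.1, by exact_mod_cast this.2⟩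

lemma le_ab (h : IsColumnwise S P a b f g) : a ≤ b := by
  obtain ⟨n, hn, rfl⟩ := h.left
  exact (h.lattice_range hn).2

lemma end_ints (h : IsColumnwise S P a b f g) :
    (∃ y : ℤ, g a = y) ∧ (∃ y : ℤ, g b = y) ∧ (∃ y : ℤ, f a = y) ∧ (∃ y : ℤ, f b = y) := by
  have hab := h.le_ab
  obtain ⟨na, hna, ha⟩ := h.left
  obtain ⟨nb, hnb, hb⟩ := h.right
  have hl : ∀ n ∈ S, n 0 ≠ a → 1 ≤ 1 * (n 0 - a) := fun n hn hne => by
    have := h.lattice_range hn; omega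
  have hr : ∀ n ∈ S, n 0 ≠ b → 1 ≤ -1 * (n 0 - b) := fun n hn hne => by
    have := h.lattice_range hn; omega
  have flip : ∀ x : ℝ, (∃ y : ℤ, -f x = y) → ∃ y : ℤ, f x = y := by
    rintro x ⟨y, hy⟩; exact ⟨-y, by push_cast; linarith⟩
  refine ⟨h.upper.exists_int a 1 ⟨le_rfl, hab⟩ ⟨_, Finset.mem_image_of_mem _ hna, ha⟩ ?_,
    h.upper.exists_int b (-1) ⟨hab, le_rfl⟩ ⟨_, Finset.mem_image_of_mem _ hnb, hb⟩ ?_,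
    flip _ <| h.lower.exists_int a 1 ⟨le_rfl, hab⟩ ⟨_, Finset.mem_image_of_mem _ hna, ha⟩ ?_,
    flip _ <| h.lower.exists_int b (-1) ⟨hab, le_rfl⟩ ⟨_, Finset.mem_image_of_mem _ hnb, hb⟩ ?_⟩
  all_goals
    intro t ht
    obtain ⟨n, hn, rfl⟩ := Finset.mem_image.1 ht
    first | exact hl n hn | exact hr n hn

lemma mem_of_interior (h : IsColumnwise S P a b f g) {x y : ℝ} (hxy : ![x, y] ∈ interior P) :
    x ∈ Ioo (a : ℝ) b ∧ f x < y ∧ y < g x := by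
  have key : ∀ u v : ℝ, ∃ ε > 0, ![x + ε * u, y + ε * v] ∈ P := by
    intro u v
    have hc : Continuous fun t : ℝ => (![x + t * u, y + t * v] : Fin 2 → ℝ) := by fun_prop
    have h0 : ∀ᶠ t : ℝ in nhds 0, ![x + t * u, y + t * v] ∈ P := by
      apply hc.continuousAt.eventually
      simpa using mem_interior_iff_mem_nhds.1 hxy
    obtain ⟨ε, hε, hb⟩ := Metric.eventually_nhds_iff.1 h0
    refine ⟨ε / 2, by linarith, hb ?_⟩
    rw [Real.dist_eq, sub_zero, abs_of_pos (by linarith)]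
    linarith
  obtain ⟨e1, p1, m1⟩ := key (-1) 0
  obtain ⟨e2, p2, m2⟩ := key 1 0
  obtain ⟨e3, p3, m3⟩ := key 0 (-1)
  obtain ⟨e4, p4, m4⟩ := key 0 1
  simp only [mul_zero, add_zero, h.mem_iff, mem_Icc, mul_one, mul_neg] at m1 m2 m3 m4
  exact ⟨⟨by linarith, by linarith⟩, by linarith, by linarith⟩

/-- The width `g - f` is concave and nonnegative on `[a, b]`, and positive at one point, hence positive
on the open interval. -/
lemma lt_of_mem_Ioo (h : IsColumnwise S P a b f g) (hne : (interior P).Nonempty)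
    {x : ℝ} (hx : x ∈ Ioo (a : ℝ) b) : f x < g x := by
  obtain ⟨p, hp⟩ := hne
  have hp' : ![p 0, p 1] ∈ interior P := by
    convert hp using 1
    ext i; fin_cases i <;> rfl
  obtain ⟨⟨hpa, hpb⟩, hf, hg⟩ := h.mem_of_interior hp'
  have hconc := h.upper.concave.add h.lower.concave
  have hD : 0 < g (p 0) + -f (p 0) := by linarith
  have main : ∀ e ∈ Icc (a : ℝ) b, ∀ s t : ℝ, 0 < s → 0 ≤ t → s + t = 1 →
      s * p 0 + t * e = x → f x < g x := by
    intro e he s t hs ht hst hx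
    have := hconc.2 (show p 0 ∈ Icc (a : ℝ) b from ⟨hpa.le, hpb.le⟩) he hs.le ht hst
    simp only [smul_eq_mul, hx, Pi.add_apply] at this
    have h1 := mul_pos hs hD
    have h2 := mul_nonneg ht (sub_nonneg.2 (h.le e he))
    nlinarith
  have hab : (a : ℝ) ≤ b := by exact_mod_cast h.le_ab
  rcases le_total x (p 0) with hle | hle
  · have : 0 < p 0 - a := by linarith
    refine main a ⟨le_rfl, hab⟩ ((x - a) / (p 0 - a)) ((p 0 - x) / (p 0 - a))
      (div_pos (by linarith [hx.1]) this) (div_nonneg (by linarith) this.le) ?_ ?_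
    · field_simp; ring
    · field_simp; ring
  · have : 0 < b - p 0 := by linarith
    refine main b ⟨hab, le_rfl⟩ ((b - x) / (b - p 0)) ((x - p 0) / (b - p 0))
      (div_pos (by linarith [hx.2]) this) (div_nonneg (by linarith) this.le) ?_ ?_
    · field_simp; ring
    · field_simp; ring

/-- The interior of `P` is cut out by the strict inequalities. For the nontrivial inclusion, a linear
functional supporting `P` at a point satisfying them would vanish: comparing with the ends of the
column kills its second coefficient, comparing with points over `a` and `b` the first. -/
lemma mem_interior_iff (h : IsColumnwise S P a b f g) (hne : (interior P).Nonempty) (x y : ℝ) :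
    ![x, y] ∈ interior P ↔ x ∈ Ioo (a : ℝ) b ∧ f x < y ∧ y < g x := by
  refine ⟨h.mem_of_interior, fun ⟨hx, hf, hg⟩ => ?_⟩
  by_contra hcon
  obtain ⟨φ, hφ⟩ := geometric_hahn_banach_open_point h.convex.interior isOpen_interior hcon
  have hφle : ∀ q ∈ P, φ q ≤ φ ![x, y] := by
    intro q hq
    have hq' : q ∈ closure (interior P) := by
      rw [h.convex.closure_interior_eq_closure_of_nonempty_interior hne]
      exact subset_closure hq
    exact closure_minimal (fun r hr => (hφ r hr).le)
      (isClosed_le φ.continuous continuous_const) hq'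
  obtain ⟨α, hα⟩ : ∃ α, α = φ ![1, 0] := ⟨_, rfl⟩
  obtain ⟨β, hβ⟩ : ∃ β, β = φ ![0, 1] := ⟨_, rfl⟩
  have hrep : ∀ u v : ℝ, φ ![u, v] = u * α + v * β := by
    intro u v
    have : (![u, v] : Fin 2 → ℝ) = u • ![1, 0] + v • ![0, 1] := by
      rw [combo_vec]; simp
    rw [this, map_add, map_smul, map_smul, hα, hβ]; rfl
  have hxI : x ∈ Icc (a : ℝ) b := ⟨hx.1.le, hx.2.le⟩
  have hab : (a : ℝ) ≤ b := by exact_mod_cast h.le_ab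
  have e1 := hφle _ ((h.mem_iff x (f x)).2 ⟨hxI, le_rfl, h.le x hxI⟩)
  have e2 := hφle _ ((h.mem_iff x (g x)).2 ⟨hxI, h.le x hxI, le_rfl⟩)
  rw [hrep, hrep] at e1 e2
  have hβ0 : β = 0 := by
    apply le_antisymm
    · by_contra! hpos; nlinarith
    · by_contra! hneg; nlinarith
  have e3 := hφle _ ((h.mem_iff a (f a)).2 ⟨⟨le_rfl, hab⟩, le_rfl, h.le a ⟨le_rfl, hab⟩⟩)
  have e4 := hφle _ ((h.mem_iff b (f b)).2 ⟨⟨hab, le_rfl⟩, le_rfl, h.le b ⟨hab, le_rfl⟩⟩)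
  rw [hrep, hrep] at e3 e4
  simp only [hβ0, mul_zero, add_zero] at e3 e4
  have hα0 : α = 0 := by
    apply le_antisymm
    · by_contra! hpos; nlinarith [hx.2]
    · by_contra! hneg; nlinarith [hx.1]
  obtain ⟨p, hp⟩ := hne
  have := hφ p hp
  have hp' : p = ![p 0, p 1] := by ext i; fin_cases i <;> rfl
  rw [hp', hrep, hrep, hα0, hβ0] at this
  simp at this

lemma intervalIntegrable_and_trapSum (h : IsColumnwise S P a b f g) (n : ℕ) (hn : b = a + n) :
    IntervalIntegrable (fun x => g x - f x) volume a b ∧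
    trapSum g a n - trapSum f a n = ∫ x in (a : ℝ)..b, (g x - f x) := by
  obtain ⟨h1, h2, ⟨y3, h3⟩, ⟨y4, h4⟩⟩ := h.end_ints
  have hb : (b : ℝ) = a + n := by exact_mod_cast hn
  rw [hb] at h2 h4
  obtain ⟨i1, e1⟩ := h.upper.trapSum_eq n a le_rfl hn.ge h1 h2
  obtain ⟨i2, e2⟩ := h.lower.trapSum_eq n a le_rfl hn.ge ⟨-y3, by push_cast; linarith⟩
    ⟨-y4, by push_cast; linarith⟩
  have hneg : trapSum (fun x => -f x) a n = -trapSum f a n := by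
    simp only [trapSum, midRound_neg, ← Finset.sum_neg_distrib]
    exact Finset.sum_congr rfl fun k _ => by ring
  rw [hneg] at e2
  rw [hb]
  have hfun : (fun x => g x - f x) = fun x => g x + -f x := by ext x; ring
  rw [hfun]
  refine ⟨i1.add i2, ?_⟩
  rw [intervalIntegral.integral_add i1 i2, ← e1, ← e2]
  ring

lemma volume_eq (h : IsColumnwise S P a b f g) :
    (volume P).toReal = ∫ x in (a : ℝ)..b, (g x - f x) := by
  have hab := h.le_ab
  have habR : (a : ℝ) ≤ b := by exact_mod_cast hab
  have hint := (h.intervalIntegrable_and_trapSum (b - a).toNat (by omega)).1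
  rw [intervalIntegrable_iff_integrableOn_Icc_of_le habR] at hint
  have hmeas : MeasurableSet P := h.isClosed.measurableSet
  have hmp := (volume_preserving_finTwoArrow ℝ).symm
  rw [← hmp.measure_preimage hmeas.nullMeasurableSet, Measure.volume_eq_prod,
    Measure.prod_apply (hmeas.preimage (MeasurableEquiv.measurable _))]
  have hslice : ∀ x : ℝ, volume (Prod.mk x ⁻¹' (MeasurableEquiv.finTwoArrow.symm ⁻¹' P))
      = (Icc (a : ℝ) b).indicator (fun x => ENNReal.ofReal (g x - f x)) x := by
    intro x
    have : Prod.mk x ⁻¹' (MeasurableEquiv.finTwoArrow.symm ⁻¹' P) = {y : ℝ | ![x, y] ∈ P} := rfl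
    rw [this]
    simp only [h.mem_iff]
    by_cases hx : x ∈ Icc (a : ℝ) b
    · rw [indicator_of_mem hx]
      simp only [hx, true_and]
      exact Real.volume_Icc
    · rw [indicator_of_notMem hx]
      simp [hx]
  rw [lintegral_congr hslice, lintegral_indicator measurableSet_Icc,
    ← ofReal_integral_eq_lintegral_ofReal hint
      ((ae_restrict_iff' measurableSet_Icc).2 (ae_of_all _ fun x hx => sub_nonneg.2 (h.le x hx))),
    integral_Icc_eq_integral_Ioc, ← intervalIntegral.integral_of_le habR,
    ENNReal.toReal_ofReal]
  exact intervalIntegral.integral_nonneg habR fun x hx => sub_nonneg.2 (h.le x hx)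

/-! ### Pick's formula -/

lemma ncard_mem (h : IsColumnwise S P a b f g) :
    {n : Fin 2 → ℤ | latticeMap n ∈ P}.Finite ∧
    ({n : Fin 2 → ℤ | latticeMap n ∈ P}.ncard : ℝ)
      = ∑ x ∈ Finset.Icc a b, ((⌊g x⌋ : ℝ) + 1 - ⌈f x⌉) := by
  have hset : {n : Fin 2 → ℤ | latticeMap n ∈ P} =
      {n : Fin 2 → ℤ | n 0 ∈ Finset.Icc a b ∧ ⌈f (n 0)⌉ ≤ n 1 ∧ n 1 ≤ ⌊g (n 0)⌋} := by
    ext n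
    have : latticeMap n = ![(n 0 : ℝ), (n 1 : ℝ)] := by ext i; fin_cases i <;> rfl
    simp only [mem_ofPred_eq, this, h.mem_iff, Finset.mem_Icc, Int.ceil_le, Int.le_floor, mem_Icc,
      Int.cast_le]
  rw [hset]
  refine ncard_columns _ (fun x => ⌈f x⌉) (fun x => ⌊g x⌋) fun x hx => ?_
  rw [Finset.mem_Icc] at hx
  have := h.le x ⟨by exact_mod_cast hx.1, by exact_mod_cast hx.2⟩
  exact (Int.ceil_le_ceil this).trans (Int.ceil_le_floor_add_one _)

lemma ncard_interior (h : IsColumnwise S P a b f g) (hne : (interior P).Nonempty) :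
    ({n : Fin 2 → ℤ | latticeMap n ∈ interior P}.ncard : ℝ)
      = ∑ x ∈ Finset.Ioo a b, ((⌈g x⌉ : ℝ) - ⌊f x⌋ - 1) := by
  have hset : {n : Fin 2 → ℤ | latticeMap n ∈ interior P} =
      {n : Fin 2 → ℤ | n 0 ∈ Finset.Ioo a b ∧ ⌊f (n 0)⌋ + 1 ≤ n 1 ∧ n 1 ≤ ⌈g (n 0)⌉ - 1} := by
    ext n
    have : latticeMap n = ![(n 0 : ℝ), (n 1 : ℝ)] := by ext i; fin_cases i <;> rfl
    simp only [mem_ofPred_eq, this, h.mem_interior_iff hne, Finset.mem_Ioo, mem_Ioo, Int.cast_lt,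
      Int.add_one_le_iff, Int.floor_lt, Int.le_sub_one_iff, Int.lt_ceil]
  rw [hset, (ncard_columns _ (fun x => ⌊f x⌋ + 1) (fun x => ⌈g x⌉ - 1) fun x hx => ?_).2]
  · refine Finset.sum_congr rfl fun x _ => ?_
    push_cast; ring
  · rw [Finset.mem_Ioo] at hx
    have := h.lt_of_mem_Ioo hne (x := x) ⟨by exact_mod_cast hx.1, by exact_mod_cast hx.2⟩
    have : ⌊f x⌋ < ⌈g x⌉ := Int.lt_ceil.2 ((Int.floor_le _).trans_lt this)
    omega

/-- Pick's formula, multiplied by two. -/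
theorem pick (h : IsColumnwise S P a b f g) (hne : (interior P).Nonempty) :
    2 * ({n : Fin 2 → ℤ | latticeMap n ∈ interior P}.ncard : ℝ)
      + ({n : Fin 2 → ℤ | latticeMap n ∈ frontier P}.ncard : ℝ)
      = 2 * (volume P).toReal + 2 := by
  obtain ⟨hfin, hmem⟩ := h.ncard_mem
  have hsplit : {n : Fin 2 → ℤ | latticeMap n ∈ P} =
      {n : Fin 2 → ℤ | latticeMap n ∈ interior P} ∪
        {n : Fin 2 → ℤ | latticeMap n ∈ frontier P} := by
    ext n
    simp only [mem_ofPred_eq, mem_union]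
    rw [← mem_union, ← closure_eq_interior_union_frontier, h.isClosed.closure_eq]
  have hdisj : Disjoint {n : Fin 2 → ℤ | latticeMap n ∈ interior P}
      {n : Fin 2 → ℤ | latticeMap n ∈ frontier P} := by
    rw [Set.disjoint_left]
    exact fun n h1 h2 => Set.disjoint_left.1 disjoint_interior_frontier h1 h2
  rw [hsplit] at hfin
  have hcard : ({n : Fin 2 → ℤ | latticeMap n ∈ P}.ncard : ℝ) =
      ({n : Fin 2 → ℤ | latticeMap n ∈ interior P}.ncard : ℝ)
      + ({n : Fin 2 → ℤ | latticeMap n ∈ frontier P}.ncard : ℝ) := by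
    rw [hsplit, ncard_union_eq hdisj (hfin.subset subset_union_left)
      (hfin.subset subset_union_right)]
    push_cast; rfl
  have hab : a < b := by
    obtain ⟨p, hp⟩ := hne
    have hp' : ![p 0, p 1] ∈ interior P := by
      convert hp using 1
      ext i; fin_cases i <;> rfl
    obtain ⟨⟨h1, h2⟩, -⟩ := h.mem_of_interior hp'
    exact_mod_cast h1.trans h2
  obtain ⟨n, hn⟩ : ∃ n : ℕ, b = a + n + 1 := ⟨(b - a - 1).toNat, by omega⟩
  have hIcc : Finset.Icc a b = insert a (insert b (Finset.Ioo a b)) := by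
    ext x; simp; omega
  rw [hIcc, Finset.sum_insert (by simp [hab.ne]), Finset.sum_insert (by simp)] at hmem
  have hint := h.ncard_interior hne
  rw [h.volume_eq, ← (h.intervalIntegrable_and_trapSum (n + 1) (by push_cast; omega)).2,
    trapSum_eq_sum_Ioo, trapSum_eq_sum_Ioo, ← hn]
  have hsum : ∑ x ∈ Finset.Ioo a b, ((⌊g x⌋ : ℝ) + 1 - ⌈f x⌉)
      + ∑ x ∈ Finset.Ioo a b, ((⌈g x⌉ : ℝ) - ⌊f x⌋ - 1) =
      2 * (∑ x ∈ Finset.Ioo a b, midRound (g x) - ∑ x ∈ Finset.Ioo a b, midRound (f x)) := by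
    rw [← Finset.sum_add_distrib, ← Finset.sum_sub_distrib, Finset.mul_sum]
    refine Finset.sum_congr rfl fun x _ => ?_
    simp only [midRound]; ring
  obtain ⟨⟨y1, h1⟩, ⟨y2, h2⟩, ⟨y3, h3⟩, ⟨y4, h4⟩⟩ := h.end_ints
  rw [h1, h2, h3, h4] at hmem ⊢
  simp only [midRound_intCast, Int.floor_intCast, Int.ceil_intCast] at hmem ⊢
  linarith

end IsColumnwise

/-- For a convex lattice polygon `P = convexHull ℝ S` with nonempty interior:
`(I + B) − (B + v)/2 + v/4 = A + (4 − v)/4`, where `A` is the area of `P`, `I` the number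
of interior lattice points, `B` the number of boundary lattice points, and `v` the number
of extreme points (vertices) of `P`. -/
theorem pick_formula_dual (S : Finset (Fin 2 → ℤ)) (P : Set (Fin 2 → ℝ))
    (hP : P = convexHull ℝ (latticeMap '' (S : Set (Fin 2 → ℤ))))
    (hne : (interior P).Nonempty)
    (A : ℝ) (hA : A = (volume P).toReal)
    (I B v : ℕ)
    (hI : I = {n : Fin 2 → ℤ | latticeMap n ∈ interior P}.ncard)
    (hB : B = {n : Fin 2 → ℤ | latticeMap n ∈ frontier P}.ncard)
    (hv : v = (Set.extremePoints ℝ P).ncard) :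
    ((I : ℝ) + (B : ℝ)) - ((B : ℝ) + (v : ℝ)) / 2 + (v : ℝ) / 4
      = A + (4 - (v : ℝ)) / 4 := by
  have hS : S.Nonempty := by
    rw [Finset.nonempty_iff_ne_empty]
    rintro rfl
    simp [hP] at hne
  obtain ⟨a, b, f, g, h⟩ := exists_isColumnwise hS
  rw [← hP] at h
  have := h.pick hne
  rw [← hI, ← hB, ← hA] at this
  linarith
end
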